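/- arXiv:1808.03596 — 8 statements merged into one kernel-verified Lean document; each statement's English description precedes it below -/
import Mathlib

section
/- Consider the ODE system on ℳ = ℝ^{n+2m+2} × 𝕋ⁿ: φ̇ᵢ = ωᵢ + 2xuᵢ, u̇ᵢ = 0 (1 ≤ i ≤ n), ẏ = Σᵢuᵢ² + x² + y², ẋ = −2xy, q̇ⱼ = pⱼ² + qⱼ², ṗⱼ = −2pⱼqⱼ (1 ≤ j ≤ m). Let z : ℝ → ℳ be a solution whose orbit is recurrent, in the sense that there exists a sequence of times t_k → +∞ with z(t_k) → z(0). Then the initial point z(0) satisfies u = 0, x = y = 0, p = q = 0, i.e., z(0) lies on the torus 𝒯 = {u = 0, x = y = 0, p = q = 0}. Consequently 𝒯 is the unique Kronecker n-torus of this system: every point belonging to some Kronecker torus lies on 𝒯. -/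
open Real Filter Topology

/-!
The derivatives of `y` and of each `q j` along the flow are sums of squares, so these coordinates
are monotone in time. A monotone function returning arbitrarily close to its initial value at
arbitrarily late times is constant from the initial time on, so each of these sums of squares
vanishes initially, and with it each of its terms.
-/

theorem eqOn_Ici_of_monotoneOn_of_tendsto {α β κ : Type*} [Preorder α] [TopologicalSpace β]
    [PartialOrder β] [ClosedIciTopology β] {l : Filter κ} [l.NeBot] {f : α → β} {τ : κ → α} {a : α}
    (hf : MonotoneOn f (Set.Ici a)) (hτ : Tendsto τ l atTop)
    (hrec : Tendsto (fun k => f (τ k)) l (𝓝 (f a))) :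
    Set.EqOn f (fun _ => f a) (Set.Ici a) := by
  intro t hat
  have eventually_ge : ∀ᶠ k in l, f t ≤ f (τ k) :=
    (hτ.eventually_ge_atTop t).mono fun _ htτ => hf hat (le_trans hat htτ) htτ
  exact (ge_of_tendsto hrec eventually_ge).antisymm (hf Set.self_mem_Ici hat hat)

theorem hasDerivWithinAt_Ici_eq_zero_of_monotoneOn_of_tendsto {E κ : Type*}
    [NormedAddCommGroup E] [NormedSpace ℝ E] [PartialOrder E] [ClosedIciTopology E]
    {l : Filter κ} [l.NeBot] {f : ℝ → E} {f' : E} {τ : κ → ℝ} {a : ℝ}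
    (hderiv : HasDerivWithinAt f f' (Set.Ici a) a) (hf : MonotoneOn f (Set.Ici a))
    (hτ : Tendsto τ l atTop) (hrec : Tendsto (fun k => f (τ k)) l (𝓝 (f a))) : f' = 0 :=
  have hconst : HasDerivWithinAt f 0 (Set.Ici a) a :=
    (hasDerivWithinAt_const a (Set.Ici a) (f a)).congr
      (eqOn_Ici_of_monotoneOn_of_tendsto hf hτ hrec) rfl
  (uniqueDiffWithinAt_Ici a).eq_deriv _ hderiv hconst

theorem eq_zero_of_hasDerivAt_nonneg_of_tendsto {κ : Type*} {l : Filter κ} [l.NeBot]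
    {f f' : ℝ → ℝ} {τ : κ → ℝ} {a : ℝ} (hderiv : ∀ t, HasDerivAt f (f' t) t)
    (hf' : ∀ t, 0 ≤ f' t) (hτ : Tendsto τ l atTop)
    (hrec : Tendsto (fun k => f (τ k)) l (𝓝 (f a))) : f' a = 0 :=
  hasDerivWithinAt_Ici_eq_zero_of_monotoneOn_of_tendsto (hderiv a).hasDerivWithinAt
    ((monotone_of_hasDerivAt_nonneg hderiv hf').monotoneOn _) hτ hrec

theorem unique_kronecker_torus_general {ι ι' κ : Type*} [Fintype ι] {l : Filter κ} [l.NeBot]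
    {u : ℝ → ι → ℝ} {x y : ℝ → ℝ} {p q : ℝ → ι' → ℝ} {τ : κ → ℝ} {a : ℝ}
    (hy : ∀ t, HasDerivAt y ((∑ i, (u t i) ^ 2) + (x t) ^ 2 + (y t) ^ 2) t)
    (hq : ∀ t j, HasDerivAt (fun s => q s j) ((p t j) ^ 2 + (q t j) ^ 2) t)
    (hτ : Tendsto τ l atTop) (hrecy : Tendsto (fun k => y (τ k)) l (𝓝 (y a)))
    (hrecq : Tendsto (fun k => q (τ k)) l (𝓝 (q a))) :
    u a = 0 ∧ x a = 0 ∧ y a = 0 ∧ p a = 0 ∧ q a = 0 := by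
  have y_deriv_zero : (∑ i, (u a i) ^ 2) + (x a) ^ 2 + (y a) ^ 2 = 0 :=
    eq_zero_of_hasDerivAt_nonneg_of_tendsto (a := a) hy (fun t => by positivity) hτ hrecy
  have q_deriv_zero (j : ι') : (p a j) ^ 2 + (q a j) ^ 2 = 0 :=
    eq_zero_of_hasDerivAt_nonneg_of_tendsto (a := a) (hq · j) (fun t => by positivity)
      hτ (hrecq.apply_nhds j)
  obtain ⟨⟨hu, hx⟩, hy⟩ : ((∀ i, u a i = 0) ∧ x a = 0) ∧ y a = 0 := by
    rw [add_eq_zero_iff_of_nonneg (by positivity) (by positivity),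
      add_eq_zero_iff_of_nonneg (by positivity) (by positivity),
      Finset.sum_eq_zero_iff_of_nonneg fun i _ => sq_nonneg (u a i)] at y_deriv_zero
    simpa using y_deriv_zero
  have hpq (j : ι') : p a j = 0 ∧ q a j = 0 := by
    simpa [add_eq_zero_iff_of_nonneg, sq_nonneg] using q_deriv_zero j
  exact ⟨funext hu, hx, hy, funext fun j => (hpq j).1, funext fun j => (hpq j).2⟩

/-- **Uniqueness of the Kronecker torus.** For the system
`φ̇ᵢ = ωᵢ + 2xuᵢ, u̇ᵢ = 0, ẏ = Σᵢuᵢ² + x² + y², ẋ = −2xy, q̇ⱼ = pⱼ² + qⱼ²,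
ṗⱼ = −2pⱼqⱼ` on ℳ = ℝ^{n+2m+2} × 𝕋ⁿ (angles represented by real lifts, the
torus coordinates compared in ℝ/2πℤ = `AddCircle (2π)`): if a solution is
recurrent — there is a sequence of times `tₖ → +∞` along which the solution
returns to its initial point — then the initial point lies on the torus
𝒯 = {u = 0, x = y = 0, p = q = 0}. Hence 𝒯 is the unique Kronecker n-torus of
the system: every point of any Kronecker torus is recurrent, so it lies on 𝒯. -/
theorem unique_kronecker_torus
    (n m : ℕ) (hn : 1 ≤ n) (ω : Fin n → ℝ)
    (u φ : ℝ → Fin n → ℝ) (x y : ℝ → ℝ) (p q : ℝ → Fin m → ℝ)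
    (hφ : ∀ t i, HasDerivAt (fun s => φ s i) (ω i + 2 * x t * u t i) t)
    (hu : ∀ t i, HasDerivAt (fun s => u s i) 0 t)
    (hy : ∀ t, HasDerivAt y ((∑ i, (u t i) ^ 2) + (x t) ^ 2 + (y t) ^ 2) t)
    (hx : ∀ t, HasDerivAt x (-2 * x t * y t) t)
    (hq : ∀ t j, HasDerivAt (fun s => q s j) ((p t j) ^ 2 + (q t j) ^ 2) t)
    (hp : ∀ t j, HasDerivAt (fun s => p s j) (-2 * p t j * q t j) t)
    (tk : ℕ → ℝ) (htk : Tendsto tk atTop atTop)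
    (hrecu : Tendsto (fun k => u (tk k)) atTop (𝓝 (u 0)))
    (hrecx : Tendsto (fun k => x (tk k)) atTop (𝓝 (x 0)))
    (hrecy : Tendsto (fun k => y (tk k)) atTop (𝓝 (y 0)))
    (hrecp : Tendsto (fun k => p (tk k)) atTop (𝓝 (p 0)))
    (hrecq : Tendsto (fun k => q (tk k)) atTop (𝓝 (q 0)))
    (hrecφ : ∀ i, Tendsto (fun k => ((φ (tk k) i : ℝ) : AddCircle (2 * π)))
      atTop (𝓝 ((φ 0 i : ℝ) : AddCircle (2 * π)))) :
    u 0 = 0 ∧ x 0 = 0 ∧ y 0 = 0 ∧ p 0 = 0 ∧ q 0 = 0 :=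
  unique_kronecker_torus_general hy hq htk hrecy hrecq
end

section
/- Let n = 1, m ≥ 0, and ω ≠ 0 a real number. Consider the ODE system on ℝ^{2m+3} × 𝕋¹: φ̇ = ω + 2xu, u̇ = 0, ẏ = u² + x² + y², ẋ = −2xy, q̇ⱼ = pⱼ² + qⱼ², ṗⱼ = −2pⱼqⱼ (1 ≤ j ≤ m). Then any periodic solution of this system has u = 0, x = y = 0, p = q = 0 identically; i.e., the circle γ = {u = 0, x = y = 0, p = q = 0} is the unique periodic orbit of this Hamiltonian system with m + 2 degrees of freedom in the whole phase space. -/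
open Real

/-!
Both `ẏ` and `q̇ⱼ` are sums of squares, so along any solution `y` and every `qⱼ` are monotone.
A monotone periodic function is constant, so along a periodic solution these sums of squares
vanish, and with them every square in them.
-/

theorem apply_eq_of_monotone_of_periodic {α β : Type*} [AddCommGroup α] [LinearOrder α]
    [IsOrderedAddMonoid α] [Archimedean α] [PartialOrder β] {f : α → β} {T : α}
    (hf : Monotone f) (hper : Function.Periodic f T) (hT : 0 < T) (a b : α) : f a = f b := by
  have apply_le (c d : α) : f c ≤ f d := by
    obtain ⟨e, he, hde⟩ := hper.exists_mem_Ico hT d c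
    exact (hf he.1).trans_eq hde.symm
  exact (apply_le a b).antisymm (apply_le b a)

theorem deriv_eq_zero_of_nonneg_of_periodic {f f' : ℝ → ℝ} {T : ℝ}
    (hf : ∀ t, HasDerivAt f (f' t) t) (hf' : 0 ≤ f') (hper : Function.Periodic f T)
    (hT : 0 < T) : f' = 0 := by
  have hmono : Monotone f := monotone_of_hasDerivAt_nonneg hf hf'
  have hconst : f = fun _ ↦ f 0 :=
    funext fun s ↦ apply_eq_of_monotone_of_periodic hmono hper hT s 0
  funext t
  exact (hf t).unique (hconst ▸ hasDerivAt_const t (f 0))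

theorem unique_periodic_orbit_general {ι : Type*} {u x y : ℝ → ℝ} {p q : ℝ → ι → ℝ} {T : ℝ}
    (hy : ∀ t, HasDerivAt y (u t ^ 2 + x t ^ 2 + y t ^ 2) t)
    (hq : ∀ t j, HasDerivAt (fun s ↦ q s j) (p t j ^ 2 + q t j ^ 2) t)
    (hT : 0 < T) (hyper : Function.Periodic y T) (hqper : Function.Periodic q T) (t : ℝ) :
    u t = 0 ∧ x t = 0 ∧ y t = 0 ∧ p t = 0 ∧ q t = 0 := by
  have hy_zero : u t ^ 2 + x t ^ 2 + y t ^ 2 = 0 :=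
    congrFun (deriv_eq_zero_of_nonneg_of_periodic hy (fun _ ↦ by positivity) hyper hT) t
  have hq_zero (j : ι) : p t j ^ 2 + q t j ^ 2 = 0 :=
    congrFun (deriv_eq_zero_of_nonneg_of_periodic (hq · j) (fun _ ↦ by positivity)
      (hqper.comp (· j)) hT) t
  have hpq (j : ι) : p t j = 0 ∧ q t j = 0 := by
    simpa [add_eq_zero_iff_of_nonneg, sq_nonneg] using hq_zero j
  obtain ⟨⟨u_eq, x_eq⟩, y_eq⟩ : (u t = 0 ∧ x t = 0) ∧ y t = 0 := by
    simpa [add_eq_zero_iff_of_nonneg, add_nonneg, sq_nonneg] using hy_zero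
  exact ⟨u_eq, x_eq, y_eq, funext fun j ↦ (hpq j).1, funext fun j ↦ (hpq j).2⟩

/-- **A unique periodic orbit in the whole phase space** (case n = 1, ω ≠ 0).
For the system `φ̇ = ω + 2xu, u̇ = 0, ẏ = u² + x² + y², ẋ = −2xy,
q̇ⱼ = pⱼ² + qⱼ², ṗⱼ = −2pⱼqⱼ` on ℝ^{2m+3} × 𝕋¹ (the angle φ is represented by
its real lift and compared in ℝ/2πℤ = `AddCircle (2π)`): every periodic solution
(a nonconstant solution of period T > 0) satisfies `u = 0, x = y = 0, p = q = 0`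
identically. Thus the circle γ = {u = 0, x = y = 0, p = q = 0} is the unique
periodic orbit of this Hamiltonian system with m + 2 degrees of freedom. -/
theorem unique_periodic_orbit
    (m : ℕ) (ω : ℝ) (hω : ω ≠ 0)
    (u φ x y : ℝ → ℝ) (p q : ℝ → Fin m → ℝ)
    (hφ : ∀ t, HasDerivAt φ (ω + 2 * x t * u t) t)
    (hu : ∀ t, HasDerivAt u 0 t)
    (hy : ∀ t, HasDerivAt y ((u t) ^ 2 + (x t) ^ 2 + (y t) ^ 2) t)
    (hx : ∀ t, HasDerivAt x (-2 * x t * y t) t)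
    (hq : ∀ t j, HasDerivAt (fun s => q s j) ((p t j) ^ 2 + (q t j) ^ 2) t)
    (hp : ∀ t j, HasDerivAt (fun s => p s j) (-2 * p t j * q t j) t)
    (T : ℝ) (hT : 0 < T)
    (hper : ∀ t : ℝ, u (t + T) = u t ∧ x (t + T) = x t ∧ y (t + T) = y t ∧
      p (t + T) = p t ∧ q (t + T) = q t ∧
      ((φ (t + T) : ℝ) : AddCircle (2 * π)) = ((φ t : ℝ) : AddCircle (2 * π)))
    (hnonconst : ∃ t s : ℝ,
      ¬(u t = u s ∧ x t = x s ∧ y t = y s ∧ p t = p s ∧ q t = q s ∧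
        ((φ t : ℝ) : AddCircle (2 * π)) = ((φ s : ℝ) : AddCircle (2 * π)))) :
    ∀ t : ℝ, u t = 0 ∧ x t = 0 ∧ y t = 0 ∧ p t = 0 ∧ q t = 0 :=
  unique_periodic_orbit_general hy hq hT (fun s ↦ (hper s).2.2.1) fun s ↦ (hper s).2.2.2.2.1
end

section
/- On ℳ = ℝ^{n+2m+2} × 𝕋ⁿ with the symplectic structure 𝛚 = Σᵢ duᵢ ∧ dφᵢ + dx ∧ dy + Σⱼ dpⱼ ∧ dqⱼ, the Poisson bracket of two functions F, G is {F, G} = Σᵢ(∂F/∂uᵢ · ∂G/∂φᵢ − ∂F/∂φᵢ · ∂G/∂uᵢ) + (∂F/∂x · ∂G/∂y − ∂F/∂y · ∂G/∂x) + Σⱼ(∂F/∂pⱼ · ∂G/∂qⱼ − ∂F/∂qⱼ · ∂G/∂pⱼ). The n + m + 1 functions H = Σᵢ(ωᵢuᵢ + xuᵢ²) + x³/3 + xy² + Σⱼ(pⱼ³/3 + pⱼqⱼ²), uᵢ (1 ≤ i ≤ n), and Fⱼ = pⱼ³/3 + pⱼqⱼ² (1 ≤ j ≤ m) are pairwise in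 involution: the Poisson bracket of any two of them vanishes identically on ℳ. -/
open Real

/-- The Poisson bracket `{F, G}` of two functions of the coordinates
`(u, x, y, p, q, φ)` on ℳ = ℝ^{n+2m+2} × 𝕋ⁿ associated with the symplectic
structure `𝛚 = Σᵢ duᵢ ∧ dφᵢ + dx ∧ dy + Σⱼ dpⱼ ∧ dqⱼ`:
`{F, G} = Σᵢ(∂F/∂uᵢ ∂G/∂φᵢ − ∂F/∂φᵢ ∂G/∂uᵢ) + (∂F/∂x ∂G/∂y − ∂F/∂y ∂G/∂x)
 + Σⱼ(∂F/∂pⱼ ∂G/∂qⱼ − ∂F/∂qⱼ ∂G/∂pⱼ)`. -/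
noncomputable def poissonBracket (n m : ℕ)
    (F G : (Fin n → ℝ) → ℝ → ℝ → (Fin m → ℝ) → (Fin m → ℝ) → (Fin n → ℝ) → ℝ)
    (u : Fin n → ℝ) (x y : ℝ) (p q : Fin m → ℝ) (φ : Fin n → ℝ) : ℝ :=
  (∑ i, (deriv (fun s => F (Function.update u i s) x y p q φ) (u i)
           * deriv (fun s => G u x y p q (Function.update φ i s)) (φ i)
         - deriv (fun s => F u x y p q (Function.update φ i s)) (φ i)
           * deriv (fun s => G (Function.update u i s) x y p q φ) (u i)))
  + (deriv (fun s => F u s y p q φ) x * deriv (fun s => G u x s p q φ) y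
     - deriv (fun s => F u x s p q φ) y * deriv (fun s => G u s y p q φ) x)
  + ∑ j, (deriv (fun s => F u x y (Function.update p j s) q φ) (p j)
            * deriv (fun s => G u x y p (Function.update q j s) φ) (q j)
          - deriv (fun s => F u x y p (Function.update q j s) φ) (q j)
            * deriv (fun s => G u x y (Function.update p j s) q φ) (p j))

/-- The family of n + m + 1 functions `H`, `uᵢ` (1 ≤ i ≤ n),
`Fⱼ = pⱼ³/3 + pⱼqⱼ²` (1 ≤ j ≤ m), where
`H = Σᵢ(ωᵢuᵢ + xuᵢ²) + x³/3 + xy² + Σⱼ(pⱼ³/3 + pⱼqⱼ²)`. -/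
noncomputable def integralFamily (n m : ℕ) (ω : Fin n → ℝ) :
    Unit ⊕ Fin n ⊕ Fin m →
      (Fin n → ℝ) → ℝ → ℝ → (Fin m → ℝ) → (Fin m → ℝ) → (Fin n → ℝ) → ℝ
  | Sum.inl _ => fun u x y p q _ =>
      (∑ i, (ω i * u i + x * (u i) ^ 2)) + x ^ 3 / 3 + x * y ^ 2
        + ∑ j, ((p j) ^ 3 / 3 + p j * (q j) ^ 2)
  | Sum.inr (Sum.inl i) => fun u _ _ _ _ _ => u i
  | Sum.inr (Sum.inr j) => fun _ _ _ p q _ => (p j) ^ 3 / 3 + p j * (q j) ^ 2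

/-!
None of the functions depends on the angles `φ`, so the `(uᵢ, φᵢ)`-terms of every bracket vanish.
For fixed `u`, each function depends on `(x, y)` only through `x Σᵢ uᵢ² + x³/3 + xy²` and on
`(pⱼ, qⱼ)` only through `pⱼ³/3 + pⱼqⱼ²`. Hence in each of these planes the gradients of any two of
the functions are parallel, and their Jacobian determinant is zero.
-/

open Function

section Calculus

variable {𝕜 : Type*} [NontriviallyNormedField 𝕜]

section PartialDifferentiability

variable {E F G : Type*} [NormedAddCommGroup E] [NormedSpace 𝕜 E] [NormedAddCommGroup F]
  [NormedSpace 𝕜 F] [NormedAddCommGroup G] [NormedSpace 𝕜 G] {f : E → F → G} {x : E} {y : F}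

theorem differentiableAt_partial_fst (hf : DifferentiableAt 𝕜 (uncurry f) (x, y)) :
    DifferentiableAt 𝕜 (fun s => f s y) x :=
  hf.comp (f := fun s => (s, y)) x (differentiableAt_id.prodMk (differentiableAt_const y))

theorem differentiableAt_partial_snd (hf : DifferentiableAt 𝕜 (uncurry f) (x, y)) :
    DifferentiableAt 𝕜 (f x) y :=
  hf.comp (f := fun t => (x, t)) y ((differentiableAt_const x).prodMk differentiableAt_id)

end PartialDifferentiability

theorem differentiableAt_comp_update {ι F : Type*} [Finite ι] [DecidableEq ι]
    [NormedAddCommGroup F] [NormedSpace 𝕜 F] {f : (ι → 𝕜) → F} {b : ι → 𝕜}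
    (hf : DifferentiableAt 𝕜 f b) (i : ι) :
    DifferentiableAt 𝕜 (fun r => f (update b i r)) (b i) := by
  have := Fintype.ofFinite ι
  rw [← update_eq_self i b] at hf
  exact hf.comp (b i) (hasDerivAt_update b i (b i)).differentiableAt

theorem jacobian_comp_eq_zero {k : 𝕜 → 𝕜 → 𝕜} {f g : 𝕜 → 𝕜} {x y : 𝕜}
    (hk : DifferentiableAt 𝕜 (uncurry k) (x, y))
    (hf : DifferentiableAt 𝕜 f (k x y)) (hg : DifferentiableAt 𝕜 g (k x y)) :
    deriv (fun s => f (k s y)) x * deriv (fun t => g (k x t)) y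
      - deriv (fun t => f (k x t)) y * deriv (fun s => g (k s y)) x = 0 := by
  have hkx : DifferentiableAt 𝕜 (fun s => k s y) x := differentiableAt_partial_fst hk
  have hky : DifferentiableAt 𝕜 (fun t => k x t) y := differentiableAt_partial_snd hk
  have chain_x {e : 𝕜 → 𝕜} (he : DifferentiableAt 𝕜 e (k x y)) :
      deriv (fun s => e (k s y)) x = deriv e (k x y) * deriv (fun s => k s y) x :=
    deriv_comp x he hkx
  have chain_y {e : 𝕜 → 𝕜} (he : DifferentiableAt 𝕜 e (k x y)) :
      deriv (fun t => e (k x t)) y = deriv e (k x y) * deriv (fun t => k x t) y :=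
    deriv_comp y he hky
  rw [chain_x hf, chain_x hg, chain_y hf, chain_y hg]
  ring

end Calculus

section Involution

variable {n m : ℕ}

/-- The function `f(u, h(u, x, y), B₁(p₁, q₁), …, Bₘ(pₘ, qₘ))` on phase space: it sees each of the
planes `(x, y)` and `(pⱼ, qⱼ)` through a single function, and does not see the angles. -/
def ofPlaneFunctions (h : (Fin n → ℝ) → ℝ → ℝ → ℝ) (B : Fin m → ℝ → ℝ → ℝ)
    (f : (Fin n → ℝ) → ℝ → (Fin m → ℝ) → ℝ) :
    (Fin n → ℝ) → ℝ → ℝ → (Fin m → ℝ) → (Fin m → ℝ) → (Fin n → ℝ) → ℝ :=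
  fun u x y p q _ => f u (h u x y) fun j => B j (p j) (q j)

section

variable (h : (Fin n → ℝ) → ℝ → ℝ → ℝ) (B : Fin m → ℝ → ℝ → ℝ)
  (f : (Fin n → ℝ) → ℝ → (Fin m → ℝ) → ℝ)
  (u : Fin n → ℝ) (x y : ℝ) (p q : Fin m → ℝ) (φ : Fin n → ℝ) (j : Fin m) (s : ℝ)

theorem ofPlaneFunctions_update_p :
    ofPlaneFunctions h B f u x y (update p j s) q φ =
      f u (h u x y) (update (fun k => B k (p k) (q k)) j (B j s (q j))) :=
  congrArg (f u (h u x y)) (funext fun k => apply_update (fun k r => B k r (q k)) p j s k)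

theorem ofPlaneFunctions_update_q :
    ofPlaneFunctions h B f u x y p (update q j s) φ =
      f u (h u x y) (update (fun k => B k (p k) (q k)) j (B j (p j) s)) :=
  congrArg (f u (h u x y)) (funext fun k => apply_update (fun k r => B k (p k) r) q j s k)

end

theorem poissonBracket_ofPlaneFunctions {h : (Fin n → ℝ) → ℝ → ℝ → ℝ} {B : Fin m → ℝ → ℝ → ℝ}
    {f g : (Fin n → ℝ) → ℝ → (Fin m → ℝ) → ℝ}
    {u : Fin n → ℝ} {x y : ℝ} {p q : Fin m → ℝ} {φ : Fin n → ℝ}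
    (hh : DifferentiableAt ℝ (uncurry (h u)) (x, y))
    (hB : ∀ j, DifferentiableAt ℝ (uncurry (B j)) (p j, q j))
    (hf : DifferentiableAt ℝ (uncurry (f u)) (h u x y, fun j => B j (p j) (q j)))
    (hg : DifferentiableAt ℝ (uncurry (g u)) (h u x y, fun j => B j (p j) (q j))) :
    poissonBracket n m (ofPlaneFunctions h B f) (ofPlaneFunctions h B g) u x y p q φ = 0 := by
  have bracket_uφ (i : Fin n) :
      deriv (fun s => ofPlaneFunctions h B f (update u i s) x y p q φ) (u i)
          * deriv (fun s => ofPlaneFunctions h B g u x y p q (update φ i s)) (φ i)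
        - deriv (fun s => ofPlaneFunctions h B f u x y p q (update φ i s)) (φ i)
          * deriv (fun s => ofPlaneFunctions h B g (update u i s) x y p q φ) (u i) = 0 := by
    simp [ofPlaneFunctions]
  have bracket_xy :
      deriv (fun s => ofPlaneFunctions h B f u s y p q φ) x
          * deriv (fun s => ofPlaneFunctions h B g u x s p q φ) y
        - deriv (fun s => ofPlaneFunctions h B f u x s p q φ) y
          * deriv (fun s => ofPlaneFunctions h B g u s y p q φ) x = 0 :=
    jacobian_comp_eq_zero hh (differentiableAt_partial_fst hf) (differentiableAt_partial_fst hg)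
  have bracket_pq (j : Fin m) :
      deriv (fun s => ofPlaneFunctions h B f u x y (update p j s) q φ) (p j)
          * deriv (fun s => ofPlaneFunctions h B g u x y p (update q j s) φ) (q j)
        - deriv (fun s => ofPlaneFunctions h B f u x y p (update q j s) φ) (q j)
          * deriv (fun s => ofPlaneFunctions h B g u x y (update p j s) q φ) (p j) = 0 := by
    simp only [ofPlaneFunctions_update_p, ofPlaneFunctions_update_q]
    exact jacobian_comp_eq_zero (hB j)
      (differentiableAt_comp_update (differentiableAt_partial_snd hf) j)
      (differentiableAt_comp_update (differentiableAt_partial_snd hg) j)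
  simp only [poissonBracket, bracket_uφ, bracket_xy, bracket_pq, Finset.sum_const_zero, add_zero]

end Involution

/-- The function `p³/3 + pq²` of a conjugate pair, whose values on the planes `(pⱼ, qⱼ)` are the
integrals `Fⱼ`. -/
noncomputable def cubicIntegral (p q : ℝ) : ℝ :=
  p ^ 3 / 3 + p * q ^ 2

/-- The part `x Σᵢ uᵢ² + x³/3 + xy²` of the Hamiltonian `H` that involves `(x, y)`. -/
noncomputable def xyHamiltonian {n : ℕ} (u : Fin n → ℝ) (x y : ℝ) : ℝ :=
  x * ∑ i, u i ^ 2 + cubicIntegral x y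

/-- The members of `integralFamily` as functions of the actions `u`, the value `c` of
`xyHamiltonian` and the values `b` of `cubicIntegral` on the planes `(pⱼ, qⱼ)`. -/
def reducedIntegral {n m : ℕ} (ω : Fin n → ℝ) :
    Unit ⊕ Fin n ⊕ Fin m → (Fin n → ℝ) → ℝ → (Fin m → ℝ) → ℝ
  | Sum.inl _ => fun u c b => ∑ i, ω i * u i + c + ∑ j, b j
  | Sum.inr (Sum.inl i) => fun u _ _ => u i
  | Sum.inr (Sum.inr j) => fun _ _ b => b j

theorem differentiable_cubicIntegral : Differentiable ℝ (uncurry cubicIntegral) := by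
  unfold uncurry cubicIntegral
  fun_prop

theorem differentiable_xyHamiltonian {n : ℕ} (u : Fin n → ℝ) :
    Differentiable ℝ (uncurry (xyHamiltonian u)) :=
  (differentiable_fst.mul_const _).add differentiable_cubicIntegral

theorem differentiable_reducedIntegral {n m : ℕ} (ω : Fin n → ℝ) (a : Unit ⊕ Fin n ⊕ Fin m)
    (u : Fin n → ℝ) : Differentiable ℝ (uncurry (reducedIntegral ω a u)) := by
  rcases a with _ | i | j <;> unfold uncurry reducedIntegral <;> fun_prop

theorem integralFamily_eq_ofPlaneFunctions {n m : ℕ} (ω : Fin n → ℝ) (a : Unit ⊕ Fin n ⊕ Fin m) :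
    integralFamily n m ω a =
      ofPlaneFunctions xyHamiltonian (fun _ => cubicIntegral) (reducedIntegral ω a) := by
  rcases a with _ | i | j
  · funext u x y p q φ
    simp only [integralFamily, ofPlaneFunctions, reducedIntegral, xyHamiltonian, cubicIntegral,
      Finset.sum_add_distrib, Finset.mul_sum]
    ring
  · rfl
  · rfl

/-- **Involutivity of the first integrals.** The n + m + 1 functions `H`,
`uᵢ` (1 ≤ i ≤ n) and `Fⱼ = pⱼ³/3 + pⱼqⱼ²` (1 ≤ j ≤ m) are pairwise in
involution: the Poisson bracket of any two of them vanishes identically on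
ℳ = ℝ^{n+2m+2} × 𝕋ⁿ. -/
theorem integrals_pairwise_in_involution
    (n m : ℕ) (hn : 1 ≤ n) (ω : Fin n → ℝ)
    (a b : Unit ⊕ Fin n ⊕ Fin m)
    (u : Fin n → ℝ) (x y : ℝ) (p q : Fin m → ℝ) (φ : Fin n → ℝ) :
    poissonBracket n m (integralFamily n m ω a) (integralFamily n m ω b)
      u x y p q φ = 0 := by
  rw [integralFamily_eq_ofPlaneFunctions ω a, integralFamily_eq_ofPlaneFunctions ω b]
  exact poissonBracket_ofPlaneFunctions (differentiable_xyHamiltonian u _)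
    (fun _ => differentiable_cubicIntegral _) (differentiable_reducedIntegral ω a u _)
    (differentiable_reducedIntegral ω b u _)
end

section
/- Consider the ODE system on M̂ = 𝕋^{2n+2m+2}: φ̇ᵢ = ωᵢ cos uᵢ + sin x · sin 2uᵢ, u̇ᵢ = 0, ẏ = (Σᵢ sin²uᵢ + sin²x + sin²y) cos x, ẋ = −sin x · sin 2y, q̇ⱼ = (sin²pⱼ + sin²qⱼ) cos pⱼ, ṗⱼ = −sin pⱼ · sin 2qⱼ. Let z : ℝ → M̂ be a solution that is entirely contained in the domain D = {−π < uᵢ < π (1 ≤ i ≤ n), −π/2 < x < π/2, −π < y < π, −π/2 < pⱼ < π/2, −π < qⱼ < π (1 ≤ j ≤ m)} (all inequalities understood modulo 2π) and whose orbit is recurrent, i.e., there is a sequence t_k → +∞ with z(t_k) → z(0). Then z(0) lies on the torus 𝒯 = {u = 0, x = y = 0, p = q = 0}. Consequently 𝒯 is an isolated Kronecker n-torus of this system: it is the only Kronecker torus entirely contained in D. -/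
open Real Filter Topology

/-!
The cosines of `x` and `pⱼ` are positive on `D`, so `y` and `qⱼ` are nondecreasing there. As `y`
avoids the point `π` of the circle, it stays in an open interval that maps homeomorphically onto the
circle minus `π`, and recurrence on the circle becomes recurrence in that interval. A nondecreasing
real function can only be recurrent by being constant from the base time on. Hence the velocity
`(∑ sin² uᵢ + sin² x + sin² y) cos x` vanishes at the base time, every sine in it is zero, and
inside `D` only the angle `0` remains. The same argument applies to each pair `(pⱼ, qⱼ)`.
-/

theorem eqOn_Ici_of_monotone_of_mapClusterPt {ι α : Type*} [Preorder ι] [PartialOrder α]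
    [TopologicalSpace α] [ClosedIciTopology α] {f : ι → α} {t₀ : ι} (hf : Monotone f)
    (hrec : MapClusterPt (f t₀) atTop f) : Set.EqOn f (fun _ ↦ f t₀) (Set.Ici t₀) := by
  intro t ht
  have hle : f t ≤ f t₀ :=
    isClosed_Ici.mem_of_mapClusterPt hrec ((eventually_ge_atTop t).mono fun _ hs ↦ hf hs)
  exact hle.antisymm (hf ht)

theorem eq_zero_of_hasDerivAt_of_eqOn_Ici {E : Type*} [NormedAddCommGroup E] [NormedSpace ℝ E]
    {f : ℝ → E} {f' : E} {t₀ : ℝ} (hf : HasDerivAt f f' t₀)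
    (hconst : Set.EqOn f (fun _ ↦ f t₀) (Set.Ici t₀)) : f' = 0 :=
  (uniqueDiffWithinAt_Ici t₀).eq_deriv _ hf.hasDerivWithinAt
    ((hasDerivWithinAt_const t₀ _ (f t₀)).congr hconst rfl)

section AddCircle

variable {T : ℝ} [Fact (0 < T)]

theorem exists_forall_mem_Ioo_of_forall_coe_ne {X : Type*} [TopologicalSpace X] [ConnectedSpace X]
    {f : X → ℝ} (hf : Continuous f) {c : AddCircle T} (hc : ∀ s, (f s : AddCircle T) ≠ c) :
    ∃ a, ∀ s, f s ∈ Set.Ioo a (a + T) := by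
  obtain ⟨s₀⟩ := ‹ConnectedSpace X›.toNonempty
  obtain ⟨c', rfl⟩ := QuotientAddGroup.mk_surjective c
  obtain ⟨k, ⟨hlt, hle⟩, -⟩ := existsUnique_add_zsmul_mem_Ioc (Fact.out : 0 < T) c' (f s₀ - T)
  set a := c' + k • T with ha
  have hcoe : (a : AddCircle T) = c' := by simp [ha]
  have hleft : a ∉ Set.range f := by
    rintro ⟨s, hs⟩
    exact hc s (hs ▸ hcoe)
  have hright : a + T ∉ Set.range f := by
    rintro ⟨s, hs⟩
    exact hc s (by rw [hs, AddCircle.coe_add_period, hcoe])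
  refine ⟨a, fun s ↦ ⟨?_, ?_⟩⟩
  · by_contra! hs
    exact hleft (mem_range_of_exists_le_of_exists_ge hf ⟨s, hs⟩ ⟨s₀, by linarith⟩)
  · by_contra! hs
    exact hright (mem_range_of_exists_le_of_exists_ge hf ⟨s₀, by linarith⟩ ⟨s, hs⟩)

theorem mapClusterPt_of_mapClusterPt_coe {X : Type*} {l : Filter X} {f : X → ℝ} {a r : ℝ}
    (hr : r ∈ Set.Ioo a (a + T)) (hf : ∀ᶠ s in l, f s ∈ Set.Ioo a (a + T))
    (h : MapClusterPt (r : AddCircle T) l fun s ↦ (f s : AddCircle T)) : MapClusterPt r l f := by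
  let e := AddCircle.openPartialHomeomorphCoe T a
  have hcont : ContinuousAt e.symm (e r) := e.continuousAt_symm (e.map_source hr)
  have hlift : MapClusterPt (e.symm (e r)) l fun s ↦ e.symm (e (f s)) := h.continuousAt_comp hcont
  rw [e.left_inv hr] at hlift
  exact (EventuallyEq.mapClusterPt_iff (hf.mono fun s hs ↦ e.left_inv hs)).1 hlift

theorem velocity_eq_zero_of_mapClusterPt_coe {f f' : ℝ → ℝ} {t₀ : ℝ} {c : AddCircle T}
    (hf : ∀ t, HasDerivAt f (f' t) t) (hf' : ∀ t, 0 ≤ f' t) (hc : ∀ t, (f t : AddCircle T) ≠ c)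
    (hrec : MapClusterPt (f t₀ : AddCircle T) atTop fun t ↦ (f t : AddCircle T)) : f' t₀ = 0 := by
  have hcont : Continuous f := continuous_iff_continuousAt.2 fun t ↦ (hf t).continuousAt
  obtain ⟨a, ha⟩ := exists_forall_mem_Ioo_of_forall_coe_ne hcont hc
  have hrec' : MapClusterPt (f t₀) atTop f :=
    mapClusterPt_of_mapClusterPt_coe (ha t₀) (Eventually.of_forall ha) hrec
  exact eq_zero_of_hasDerivAt_of_eqOn_Ici (hf t₀)
    (eqOn_Ici_of_monotone_of_mapClusterPt (monotone_of_hasDerivAt_nonneg hf hf') hrec')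

theorem coe_ne_coe_of_sub_mem_Ioo {a r : ℝ} {k : ℤ} (h : r - T * k ∈ Set.Ioo a (a + T)) :
    (r : AddCircle T) ≠ a := by
  have hne : ((r - T * k : ℝ) : AddCircle T) ≠ a :=
    (AddCircle.openPartialHomeomorphCoe T a).map_source h
  rwa [mul_comm, ← zsmul_eq_mul, AddCircle.coe_sub, AddCircle.coe_zsmul, AddCircle.coe_period,
    smul_zero, sub_zero] at hne

end AddCircle

theorem cos_pos_of_sub_mem_Ioo {r : ℝ} {k : ℤ} (h : r - 2 * π * k ∈ Set.Ioo (-(π / 2)) (π / 2)) :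
    0 < cos r := by
  simpa only [mul_comm (2 * π), cos_sub_int_mul_two_pi] using cos_pos_of_mem_Ioo h

theorem coe_ne_pi_of_sub_mem_Ioo {r : ℝ} {k : ℤ} (h : r - 2 * π * k ∈ Set.Ioo (-π) π) :
    (r : AddCircle (2 * π)) ≠ (π : ℝ) := by
  have : Fact (0 < 2 * π) := ⟨two_pi_pos⟩
  have hneg : ((-π : ℝ) : AddCircle (2 * π)) = (π : ℝ) := Real.Angle.neg_coe_pi
  rw [← hneg]
  exact coe_ne_coe_of_sub_mem_Ioo (by rwa [show -π + 2 * π = π by ring])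

theorem coe_ne_pi_of_cos_pos {r : ℝ} (h : 0 < cos r) : (r : AddCircle (2 * π)) ≠ (π : ℝ) := by
  intro hr
  have hcos : cos r = cos π := congrArg Real.Angle.cos hr
  linarith [cos_pi]

theorem coe_eq_zero_of_sin_eq_zero {r : ℝ} (h : sin r = 0)
    (hr : (r : AddCircle (2 * π)) ≠ (π : ℝ)) : (r : AddCircle (2 * π)) = 0 :=
  (Real.Angle.sin_eq_zero_iff (θ := (r : Real.Angle)) |>.1 h).resolve_right hr

theorem eq_zero_of_recurrent_of_hasDerivAt_mul_cos {c x y : ℝ → ℝ} {t₀ : ℝ} (hc : ∀ t, 0 ≤ c t)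
    (hy : ∀ t, HasDerivAt y ((c t + sin (x t) ^ 2 + sin (y t) ^ 2) * cos (x t)) t)
    (hDx : ∀ t, ∃ k : ℤ, x t - 2 * π * k ∈ Set.Ioo (-(π / 2)) (π / 2))
    (hDy : ∀ t, ∃ k : ℤ, y t - 2 * π * k ∈ Set.Ioo (-π) π)
    (hrec : MapClusterPt (y t₀ : AddCircle (2 * π)) atTop fun t ↦ (y t : AddCircle (2 * π))) :
    c t₀ = 0 ∧ (x t₀ : AddCircle (2 * π)) = 0 ∧ (y t₀ : AddCircle (2 * π)) = 0 := by
  have : Fact (0 < 2 * π) := ⟨two_pi_pos⟩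
  have hcos (t) : 0 < cos (x t) := (hDx t).elim fun _ ↦ cos_pos_of_sub_mem_Ioo
  have hy_ne (t) : (y t : AddCircle (2 * π)) ≠ (π : ℝ) :=
    (hDy t).elim fun _ ↦ coe_ne_pi_of_sub_mem_Ioo
  have hcx (t) : 0 ≤ c t + sin (x t) ^ 2 := add_nonneg (hc t) (sq_nonneg _)
  have hvel := velocity_eq_zero_of_mapClusterPt_coe hy
    (fun t ↦ mul_nonneg (add_nonneg (hcx t) (sq_nonneg _)) (hcos t).le) hy_ne hrec
  have hsum := (mul_eq_zero.1 hvel).resolve_right (hcos t₀).ne'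
  rw [add_eq_zero_iff_of_nonneg (hcx t₀) (sq_nonneg _),
    add_eq_zero_iff_of_nonneg (hc t₀) (sq_nonneg _)] at hsum
  obtain ⟨⟨hc₀, hx₀⟩, hy₀⟩ := hsum
  exact ⟨hc₀, coe_eq_zero_of_sin_eq_zero (sq_eq_zero_iff.1 hx₀) (coe_ne_pi_of_cos_pos (hcos t₀)),
    coe_eq_zero_of_sin_eq_zero (sq_eq_zero_iff.1 hy₀) (hy_ne t₀)⟩

theorem isolated_kronecker_torus_compact_general {ι κ : Type*} [Fintype ι] {t₀ : ℝ}
    {u : ℝ → ι → ℝ} {x y : ℝ → ℝ} {p q : ℝ → κ → ℝ}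
    (hy : ∀ t, HasDerivAt y
      (((∑ i, sin (u t i) ^ 2) + sin (x t) ^ 2 + sin (y t) ^ 2) * cos (x t)) t)
    (hq : ∀ t j, HasDerivAt (fun s ↦ q s j)
      ((sin (p t j) ^ 2 + sin (q t j) ^ 2) * cos (p t j)) t)
    (hDu : ∀ i, ∃ k : ℤ, u t₀ i - 2 * π * k ∈ Set.Ioo (-π) π)
    (hDx : ∀ t, ∃ k : ℤ, x t - 2 * π * k ∈ Set.Ioo (-(π / 2)) (π / 2))
    (hDy : ∀ t, ∃ k : ℤ, y t - 2 * π * k ∈ Set.Ioo (-π) π)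
    (hDp : ∀ t j, ∃ k : ℤ, p t j - 2 * π * k ∈ Set.Ioo (-(π / 2)) (π / 2))
    (hDq : ∀ t j, ∃ k : ℤ, q t j - 2 * π * k ∈ Set.Ioo (-π) π)
    (hrecy : MapClusterPt (y t₀ : AddCircle (2 * π)) atTop fun t ↦ (y t : AddCircle (2 * π)))
    (hrecq : ∀ j, MapClusterPt (q t₀ j : AddCircle (2 * π)) atTop
      fun t ↦ (q t j : AddCircle (2 * π))) :
    (∀ i, (u t₀ i : AddCircle (2 * π)) = 0) ∧
    (x t₀ : AddCircle (2 * π)) = 0 ∧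
    (y t₀ : AddCircle (2 * π)) = 0 ∧
    (∀ j, (p t₀ j : AddCircle (2 * π)) = 0) ∧
    (∀ j, (q t₀ j : AddCircle (2 * π)) = 0) := by
  obtain ⟨hu₀, hx₀, hy₀⟩ := eq_zero_of_recurrent_of_hasDerivAt_mul_cos
    (fun t ↦ Finset.sum_nonneg fun i _ ↦ sq_nonneg (sin (u t i))) hy hDx hDy hrecy
  have hpq₀ (j) : (p t₀ j : AddCircle (2 * π)) = 0 ∧ (q t₀ j : AddCircle (2 * π)) = 0 :=
    (eq_zero_of_recurrent_of_hasDerivAt_mul_cos (c := fun _ ↦ 0) (fun _ ↦ le_rfl)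
      (fun t ↦ by simpa only [zero_add] using hq t j) (hDp · j) (hDq · j) (hrecq j)).2
  refine ⟨fun i ↦ ?_, hx₀, hy₀, fun j ↦ (hpq₀ j).1, fun j ↦ (hpq₀ j).2⟩
  rw [Fintype.sum_eq_zero_iff_of_nonneg fun i ↦ sq_nonneg _] at hu₀
  exact coe_eq_zero_of_sin_eq_zero (sq_eq_zero_iff.1 (congrFun hu₀ i))
    ((hDu i).elim fun _ ↦ coe_ne_pi_of_sub_mem_Ioo)

/-- **Isolatedness of the torus 𝒯 in the compactified system.** Consider the
system on M̂ = 𝕋^{2n+2m+2} (all coordinates angular, represented by real lifts,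
compared in ℝ/2πℤ = `AddCircle (2π)`):
`φ̇ᵢ = ωᵢ cos uᵢ + sin x · sin 2uᵢ, u̇ᵢ = 0,
ẏ = (Σᵢ sin²uᵢ + sin²x + sin²y) cos x, ẋ = −sin x · sin 2y,
q̇ⱼ = (sin²pⱼ + sin²qⱼ) cos pⱼ, ṗⱼ = −sin pⱼ · sin 2qⱼ`.
If a solution is entirely contained (mod 2π) in the domain
`D = {−π < uᵢ < π, −π/2 < x < π/2, −π < y < π, −π/2 < pⱼ < π/2, −π < qⱼ < π}`
and is recurrent (there is a sequence of times `tₖ → +∞` along which it returns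
to its initial point), then its initial point lies on the torus
𝒯 = {u = 0, x = y = 0, p = q = 0}. Consequently 𝒯 is an isolated Kronecker
n-torus: it is the only Kronecker torus entirely contained in `D`. -/
theorem isolated_kronecker_torus_compact
    (n m : ℕ) (hn : 1 ≤ n) (ω : Fin n → ℝ)
    (u φ : ℝ → Fin n → ℝ) (x y : ℝ → ℝ) (p q : ℝ → Fin m → ℝ)
    (hφ : ∀ t i, HasDerivAt (fun s => φ s i)
      (ω i * Real.cos (u t i) + Real.sin (x t) * Real.sin (2 * u t i)) t)
    (hu : ∀ t i, HasDerivAt (fun s => u s i) 0 t)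
    (hy : ∀ t, HasDerivAt y
      (((∑ i, Real.sin (u t i) ^ 2) + Real.sin (x t) ^ 2 + Real.sin (y t) ^ 2)
        * Real.cos (x t)) t)
    (hx : ∀ t, HasDerivAt x (-(Real.sin (x t) * Real.sin (2 * y t))) t)
    (hq : ∀ t j, HasDerivAt (fun s => q s j)
      ((Real.sin (p t j) ^ 2 + Real.sin (q t j) ^ 2) * Real.cos (p t j)) t)
    (hp : ∀ t j, HasDerivAt (fun s => p s j)
      (-(Real.sin (p t j) * Real.sin (2 * q t j))) t)
    -- the solution lies in the domain D (all inequalities understood mod 2π)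
    (hDu : ∀ t i, ∃ k : ℤ, u t i - 2 * π * k ∈ Set.Ioo (-π) π)
    (hDx : ∀ t, ∃ k : ℤ, x t - 2 * π * k ∈ Set.Ioo (-(π / 2)) (π / 2))
    (hDy : ∀ t, ∃ k : ℤ, y t - 2 * π * k ∈ Set.Ioo (-π) π)
    (hDp : ∀ t j, ∃ k : ℤ, p t j - 2 * π * k ∈ Set.Ioo (-(π / 2)) (π / 2))
    (hDq : ∀ t j, ∃ k : ℤ, q t j - 2 * π * k ∈ Set.Ioo (-π) π)
    -- recurrence: z(tₖ) → z(0) on the torus, with tₖ → +∞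
    (tk : ℕ → ℝ) (htk : Tendsto tk atTop atTop)
    (hrecu : ∀ i, Tendsto (fun k => ((u (tk k) i : ℝ) : AddCircle (2 * π)))
      atTop (𝓝 ((u 0 i : ℝ) : AddCircle (2 * π))))
    (hrecx : Tendsto (fun k => ((x (tk k) : ℝ) : AddCircle (2 * π)))
      atTop (𝓝 ((x 0 : ℝ) : AddCircle (2 * π))))
    (hrecy : Tendsto (fun k => ((y (tk k) : ℝ) : AddCircle (2 * π)))
      atTop (𝓝 ((y 0 : ℝ) : AddCircle (2 * π))))
    (hrecp : ∀ j, Tendsto (fun k => ((p (tk k) j : ℝ) : AddCircle (2 * π)))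
      atTop (𝓝 ((p 0 j : ℝ) : AddCircle (2 * π))))
    (hrecq : ∀ j, Tendsto (fun k => ((q (tk k) j : ℝ) : AddCircle (2 * π)))
      atTop (𝓝 ((q 0 j : ℝ) : AddCircle (2 * π))))
    (hrecφ : ∀ i, Tendsto (fun k => ((φ (tk k) i : ℝ) : AddCircle (2 * π)))
      atTop (𝓝 ((φ 0 i : ℝ) : AddCircle (2 * π)))) :
    (∀ i, ((u 0 i : ℝ) : AddCircle (2 * π)) = 0) ∧
    ((x 0 : ℝ) : AddCircle (2 * π)) = 0 ∧
    ((y 0 : ℝ) : AddCircle (2 * π)) = 0 ∧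
    (∀ j, ((p 0 j : ℝ) : AddCircle (2 * π)) = 0) ∧
    (∀ j, ((q 0 j : ℝ) : AddCircle (2 * π)) = 0) :=
  isolated_kronecker_torus_compact_general hy hq (hDu 0) hDx hDy hDp hDq
    (.of_comp htk hrecy.mapClusterPt) fun j ↦ .of_comp htk (hrecq j).mapClusterPt
end

section
/- The n + m + 1 functions Ĥ = Σᵢ(ωᵢ sin uᵢ + sin x · sin²uᵢ) + sin³x/3 + sin x · sin²y + Σⱼ(sin³pⱼ/3 + sin pⱼ · sin²qⱼ), sin uᵢ (1 ≤ i ≤ n), and F̂ⱼ = sin³pⱼ/3 + sin pⱼ · sin²qⱼ (1 ≤ j ≤ m) are first integrals of the ODE system on 𝕋^{2n+2m+2}: φ̇ᵢ = ωᵢ cos uᵢ + sin x · sin 2uᵢ, u̇ᵢ = 0, ẏ = (Σᵢ sin²uᵢ + sin²x + sin²y) cos x, ẋ = −sin x · sin 2y, q̇ⱼ = (sin²pⱼ + sin²qⱼ) cos pⱼ, ṗⱼ = −sin pⱼ · sin 2qⱼ: each is constant along every solution. Moreover, at every point of the torus 𝒯 = {u = 0, x = y = 0, p = q = 0} one has dĤ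 = Σᵢ ωᵢ cos uᵢ duᵢ = Σᵢ ωᵢ duᵢ and dF̂ⱼ = 0. -/
open Real

/-- The Hamilton function of the compactified system on 𝕋^{2n+2m+2}:
`Ĥ = Σᵢ(ωᵢ sin uᵢ + sin x · sin²uᵢ) + sin³x/3 + sin x · sin²y
 + Σⱼ(sin³pⱼ/3 + sin pⱼ · sin²qⱼ)` (all coordinates angular, real lifts). -/
noncomputable def Hhat (n m : ℕ) (ω : Fin n → ℝ)
    (u : Fin n → ℝ) (x y : ℝ) (p q : Fin m → ℝ) : ℝ :=
  (∑ i, (ω i * Real.sin (u i) + Real.sin x * Real.sin (u i) ^ 2))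
    + Real.sin x ^ 3 / 3 + Real.sin x * Real.sin y ^ 2
    + ∑ j, (Real.sin (p j) ^ 3 / 3 + Real.sin (p j) * Real.sin (q j) ^ 2)

/-- The integrals `F̂ⱼ = sin³pⱼ/3 + sin pⱼ · sin²qⱼ` of the compactified system. -/
noncomputable def Fhat (m : ℕ) (j : Fin m) (p q : Fin m → ℝ) : ℝ :=
  Real.sin (p j) ^ 3 / 3 + Real.sin (p j) * Real.sin (q j) ^ 2

/-!
In the variables `(u, φ)`, `(x, y)`, `(pⱼ, qⱼ)` the system has the form `φ̇ = ∂Ĥ/∂u`,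
`u̇ = -∂Ĥ/∂φ = 0`, `ẏ = ∂Ĥ/∂x`, `ẋ = -∂Ĥ/∂y`, `q̇ⱼ = ∂Ĥ/∂pⱼ`, `ṗⱼ = -∂Ĥ/∂qⱼ`. The chain rule
therefore makes `Ĥ` constant, and likewise each `F̂ⱼ`, since `(pⱼ, qⱼ)` evolves on its own with
Hamiltonian `F̂ⱼ`. Every term of `dĤ` except `∑ ωᵢ cos uᵢ duᵢ`, and every term of `dF̂ⱼ`, contains
the sine of some coordinate, so these terms vanish on `𝒯`.
-/

theorem eq_of_hasDerivAt_zero {f : ℝ → ℝ} (hf : ∀ t, HasDerivAt f 0 t) (t₁ t₂ : ℝ) :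
    f t₁ = f t₂ :=
  is_const_of_deriv_eq_zero (fun t => (hf t).differentiableAt) (fun t => (hf t).deriv) t₁ t₂

theorem cos_eq_one_of_eq_two_pi_mul_int {a : ℝ} (ha : ∃ k : ℤ, a = 2 * π * k) : cos a = 1 := by
  obtain ⟨k, rfl⟩ := ha
  rw [mul_comm, cos_int_mul_two_pi]

theorem sin_eq_zero_of_eq_two_pi_mul_int {a : ℝ} (ha : ∃ k : ℤ, a = 2 * π * k) : sin a = 0 :=
  sin_eq_zero_iff_cos_eq.2 (.inl (cos_eq_one_of_eq_two_pi_mul_int ha))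

section ChainRule

variable {n m : ℕ} {x y : ℝ → ℝ} {x' y' t : ℝ} {u : ℝ → Fin n → ℝ} {u' : Fin n → ℝ}
  {p q : ℝ → Fin m → ℝ} {p' q' : Fin m → ℝ}

theorem hasDerivAt_sin_pow_three_div_three_add_sin_mul_sin_sq
    (hx : HasDerivAt x x' t) (hy : HasDerivAt y y' t) :
    HasDerivAt (fun s => sin (x s) ^ 3 / 3 + sin (x s) * sin (y s) ^ 2)
      ((sin (x t) ^ 2 + sin (y t) ^ 2) * cos (x t) * x' + sin (x t) * sin (2 * y t) * y') t := by
  refine (((hx.sin.fun_pow 3).div_const 3).fun_add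
    (hx.sin.fun_mul (hy.sin.fun_pow 2))).congr_deriv ?_
  rw [sin_two_mul]
  push_cast
  ring

theorem hasDerivAt_Fhat (hp : HasDerivAt p p' t) (hq : HasDerivAt q q' t) (j : Fin m) :
    HasDerivAt (fun s => Fhat m j (p s) (q s))
      ((sin (p t j) ^ 2 + sin (q t j) ^ 2) * cos (p t j) * p' j
        + sin (p t j) * sin (2 * q t j) * q' j) t :=
  hasDerivAt_sin_pow_three_div_three_add_sin_mul_sin_sq
    (hasDerivAt_pi.1 hp j) (hasDerivAt_pi.1 hq j)

theorem hasDerivAt_sum_mul_sin_add_sin_mul_sin_sq (ω : Fin n → ℝ)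
    (hu : HasDerivAt u u' t) (hx : HasDerivAt x x' t) :
    HasDerivAt (fun s => ∑ i, (ω i * sin (u s i) + sin (x s) * sin (u s i) ^ 2))
      (∑ i, (ω i * cos (u t i) + sin (x t) * sin (2 * u t i)) * u' i
        + (∑ i, sin (u t i) ^ 2) * cos (x t) * x') t := by
  rw [hasDerivAt_pi] at hu
  refine (HasDerivAt.fun_sum fun i _ => ((hu i).sin.const_mul (ω i)).fun_add
    (hx.sin.fun_mul ((hu i).sin.fun_pow 2))).congr_deriv ?_
  simp only [Finset.sum_mul, ← Finset.sum_add_distrib]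
  refine Finset.sum_congr rfl fun i _ => ?_
  rw [sin_two_mul]
  push_cast
  ring

theorem hasDerivAt_Hhat (ω : Fin n → ℝ) (hu : HasDerivAt u u' t) (hx : HasDerivAt x x' t)
    (hy : HasDerivAt y y' t) (hp : HasDerivAt p p' t) (hq : HasDerivAt q q' t) :
    HasDerivAt (fun s => Hhat n m ω (u s) (x s) (y s) (p s) (q s))
      (∑ i, (ω i * cos (u t i) + sin (x t) * sin (2 * u t i)) * u' i
        + (∑ i, sin (u t i) ^ 2 + sin (x t) ^ 2 + sin (y t) ^ 2) * cos (x t) * x'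
        + sin (x t) * sin (2 * y t) * y'
        + ∑ j, ((sin (p t j) ^ 2 + sin (q t j) ^ 2) * cos (p t j) * p' j
          + sin (p t j) * sin (2 * q t j) * q' j)) t := by
  have hux := hasDerivAt_sum_mul_sin_add_sin_mul_sin_sq ω hu hx
  have hxy := hasDerivAt_sin_pow_three_div_three_add_sin_mul_sin_sq hx hy
  have hF := HasDerivAt.fun_sum fun j (_ : j ∈ Finset.univ) => hasDerivAt_Fhat hp hq j
  refine (((hux.fun_add hxy).fun_add hF).congr_deriv (by ring)).congr_of_eventuallyEq
    (.of_forall fun s => ?_)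
  simp only [Hhat, Fhat, add_assoc]

end ChainRule

section FirstIntegrals

variable {n m : ℕ} {ω : Fin n → ℝ} {u : ℝ → Fin n → ℝ} {x y : ℝ → ℝ} {p q : ℝ → Fin m → ℝ}

theorem Fhat_const_of_hasDerivAt
    (hq : ∀ t j, HasDerivAt (fun s => q s j)
      ((sin (p t j) ^ 2 + sin (q t j) ^ 2) * cos (p t j)) t)
    (hp : ∀ t j, HasDerivAt (fun s => p s j) (-(sin (p t j) * sin (2 * q t j))) t)
    (j : Fin m) (t₁ t₂ : ℝ) : Fhat m j (p t₁) (q t₁) = Fhat m j (p t₂) (q t₂) :=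
  eq_of_hasDerivAt_zero (f := fun s => Fhat m j (p s) (q s)) (fun t =>
    (hasDerivAt_Fhat (hasDerivAt_pi.2 (hp t)) (hasDerivAt_pi.2 (hq t)) j).congr_deriv (by ring))
    t₁ t₂

theorem Hhat_const_of_hasDerivAt
    (hu : ∀ t i, HasDerivAt (fun s => u s i) 0 t)
    (hy : ∀ t, HasDerivAt y
      ((∑ i, sin (u t i) ^ 2 + sin (x t) ^ 2 + sin (y t) ^ 2) * cos (x t)) t)
    (hx : ∀ t, HasDerivAt x (-(sin (x t) * sin (2 * y t))) t)
    (hq : ∀ t j, HasDerivAt (fun s => q s j)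
      ((sin (p t j) ^ 2 + sin (q t j) ^ 2) * cos (p t j)) t)
    (hp : ∀ t j, HasDerivAt (fun s => p s j) (-(sin (p t j) * sin (2 * q t j))) t)
    (t₁ t₂ : ℝ) :
    Hhat n m ω (u t₁) (x t₁) (y t₁) (p t₁) (q t₁)
      = Hhat n m ω (u t₂) (x t₂) (y t₂) (p t₂) (q t₂) := by
  refine eq_of_hasDerivAt_zero (f := fun s => Hhat n m ω (u s) (x s) (y s) (p s) (q s))
    (fun t => (hasDerivAt_Hhat ω (hasDerivAt_pi.2 (hu t)) (hx t) (hy t)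
      (hasDerivAt_pi.2 (hp t)) (hasDerivAt_pi.2 (hq t))).congr_deriv ?_) t₁ t₂
  have hpq (j : Fin m) :
      (sin (p t j) ^ 2 + sin (q t j) ^ 2) * cos (p t j) * -(sin (p t j) * sin (2 * q t j))
        + sin (p t j) * sin (2 * q t j) * ((sin (p t j) ^ 2 + sin (q t j) ^ 2) * cos (p t j))
        = 0 := by ring
  simp only [hpq, mul_zero, Finset.sum_const_zero]
  ring

end FirstIntegrals

section PartialDerivatives

variable {n m : ℕ} (ω u : Fin n → ℝ) (x y : ℝ) (p q : Fin m → ℝ)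

theorem deriv_Fhat_update_p (j j' : Fin m) :
    deriv (fun s => Fhat m j (Function.update p j' s) q) (p j')
      = if j = j' then (sin (p j) ^ 2 + sin (q j) ^ 2) * cos (p j) else 0 :=
  (hasDerivAt_Fhat (hasDerivAt_update p j' _) (hasDerivAt_const _ q) j).deriv.trans
    (by simp [Pi.single_apply])

theorem deriv_Fhat_update_q (j j' : Fin m) :
    deriv (fun s => Fhat m j p (Function.update q j' s)) (q j')
      = if j = j' then sin (p j) * sin (2 * q j) else 0 :=
  (hasDerivAt_Fhat (hasDerivAt_const _ p) (hasDerivAt_update q j' _) j).deriv.trans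
    (by simp [Pi.single_apply])

theorem deriv_Hhat_update_u (i : Fin n) :
    deriv (fun s => Hhat n m ω (Function.update u i s) x y p q) (u i)
      = ω i * cos (u i) + sin x * sin (2 * u i) :=
  (hasDerivAt_Hhat ω (hasDerivAt_update u i _) (hasDerivAt_const _ x) (hasDerivAt_const _ y)
    (hasDerivAt_const _ p) (hasDerivAt_const _ q)).deriv.trans (by simp [Pi.single_apply])

theorem deriv_Hhat_x :
    deriv (fun s => Hhat n m ω u s y p q) x
      = (∑ i, sin (u i) ^ 2 + sin x ^ 2 + sin y ^ 2) * cos x :=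
  (hasDerivAt_Hhat ω (hasDerivAt_const _ u) (hasDerivAt_id' x) (hasDerivAt_const _ y)
    (hasDerivAt_const _ p) (hasDerivAt_const _ q)).deriv.trans (by simp)

theorem deriv_Hhat_y : deriv (fun s => Hhat n m ω u x s p q) y = sin x * sin (2 * y) :=
  (hasDerivAt_Hhat ω (hasDerivAt_const _ u) (hasDerivAt_const _ x) (hasDerivAt_id' y)
    (hasDerivAt_const _ p) (hasDerivAt_const _ q)).deriv.trans (by simp)

theorem deriv_Hhat_update_p (j : Fin m) :
    deriv (fun s => Hhat n m ω u x y (Function.update p j s) q) (p j)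
      = (sin (p j) ^ 2 + sin (q j) ^ 2) * cos (p j) :=
  (hasDerivAt_Hhat ω (hasDerivAt_const _ u) (hasDerivAt_const _ x) (hasDerivAt_const _ y)
    (hasDerivAt_update p j _) (hasDerivAt_const _ q)).deriv.trans (by simp [Pi.single_apply])

theorem deriv_Hhat_update_q (j : Fin m) :
    deriv (fun s => Hhat n m ω u x y p (Function.update q j s)) (q j)
      = sin (p j) * sin (2 * q j) :=
  (hasDerivAt_Hhat ω (hasDerivAt_const _ u) (hasDerivAt_const _ x) (hasDerivAt_const _ y)
    (hasDerivAt_const _ p) (hasDerivAt_update q j _)).deriv.trans (by simp [Pi.single_apply])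

end PartialDerivatives

/-- **First integrals and degeneracy relations for the compactified system** on
M̂ = 𝕋^{2n+2m+2}: `φ̇ᵢ = ωᵢ cos uᵢ + sin x · sin 2uᵢ, u̇ᵢ = 0,
ẏ = (Σᵢ sin²uᵢ + sin²x + sin²y) cos x, ẋ = −sin x · sin 2y,
q̇ⱼ = (sin²pⱼ + sin²qⱼ) cos pⱼ, ṗⱼ = −sin pⱼ · sin 2qⱼ`.
(1) The n + m + 1 functions `Ĥ`, `sin uᵢ` (1 ≤ i ≤ n) and `F̂ⱼ` (1 ≤ j ≤ m) are
constant along every solution. (2) At every point of the torus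
𝒯 = {u = 0, x = y = 0, p = q = 0} (i.e., at every real lift whose coordinates
are all ≡ 0 mod 2π) one has `dĤ = Σᵢ ωᵢ duᵢ` (the uᵢ-partial derivatives of `Ĥ`
equal `ωᵢ cos uᵢ = ωᵢ` and all its other partial derivatives vanish) and
`dF̂ⱼ = 0` (all partial derivatives of each `F̂ⱼ` vanish). -/
theorem compact_first_integrals_and_degeneracy
    (n m : ℕ) (hn : 1 ≤ n) (ω : Fin n → ℝ) :
    -- (1) first integrals
    (∀ (u φ : ℝ → Fin n → ℝ) (x y : ℝ → ℝ) (p q : ℝ → Fin m → ℝ),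
      (∀ t i, HasDerivAt (fun s => φ s i)
        (ω i * Real.cos (u t i) + Real.sin (x t) * Real.sin (2 * u t i)) t) →
      (∀ t i, HasDerivAt (fun s => u s i) 0 t) →
      (∀ t, HasDerivAt y
        (((∑ i, Real.sin (u t i) ^ 2) + Real.sin (x t) ^ 2 + Real.sin (y t) ^ 2)
          * Real.cos (x t)) t) →
      (∀ t, HasDerivAt x (-(Real.sin (x t) * Real.sin (2 * y t))) t) →
      (∀ t j, HasDerivAt (fun s => q s j)
        ((Real.sin (p t j) ^ 2 + Real.sin (q t j) ^ 2) * Real.cos (p t j)) t) →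
      (∀ t j, HasDerivAt (fun s => p s j)
        (-(Real.sin (p t j) * Real.sin (2 * q t j))) t) →
      ∀ t : ℝ,
        Hhat n m ω (u t) (x t) (y t) (p t) (q t)
          = Hhat n m ω (u 0) (x 0) (y 0) (p 0) (q 0) ∧
        (∀ i, Real.sin (u t i) = Real.sin (u 0 i)) ∧
        (∀ j, Fhat m j (p t) (q t) = Fhat m j (p 0) (q 0))) ∧
    -- (2) degeneracy relations at every point of the torus 𝒯
    (∀ (u : Fin n → ℝ) (x y : ℝ) (p q : Fin m → ℝ),
      (∀ i, ∃ k : ℤ, u i = 2 * π * k) → (∃ k : ℤ, x = 2 * π * k) →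
      (∃ k : ℤ, y = 2 * π * k) → (∀ j, ∃ k : ℤ, p j = 2 * π * k) →
      (∀ j, ∃ k : ℤ, q j = 2 * π * k) →
      (∀ i, deriv (fun s => Hhat n m ω (Function.update u i s) x y p q) (u i)
          = ω i * Real.cos (u i) ∧ ω i * Real.cos (u i) = ω i) ∧
      deriv (fun s => Hhat n m ω u s y p q) x = 0 ∧
      deriv (fun s => Hhat n m ω u x s p q) y = 0 ∧
      (∀ j, deriv (fun s => Hhat n m ω u x y (Function.update p j s) q) (p j) = 0) ∧
      (∀ j, deriv (fun s => Hhat n m ω u x y p (Function.update q j s)) (q j) = 0) ∧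
      (∀ j j', deriv (fun s => Fhat m j (Function.update p j' s) q) (p j') = 0) ∧
      (∀ j j', deriv (fun s => Fhat m j p (Function.update q j' s)) (q j') = 0)) := by
  constructor
  · intro u φ x y p q _ hu hy hx hq hp t
    have u_const (i : Fin n) : u t i = u 0 i := eq_of_hasDerivAt_zero (fun s => hu s i) t 0
    exact ⟨Hhat_const_of_hasDerivAt hu hy hx hq hp t 0, fun i => by rw [u_const i],
      fun j => Fhat_const_of_hasDerivAt hq hp j t 0⟩
  · intro u x y p q hu hx hy hp hq
    have su (i : Fin n) := sin_eq_zero_of_eq_two_pi_mul_int (hu i)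
    have sx := sin_eq_zero_of_eq_two_pi_mul_int hx
    have sy := sin_eq_zero_of_eq_two_pi_mul_int hy
    have sp (j : Fin m) := sin_eq_zero_of_eq_two_pi_mul_int (hp j)
    have sq (j : Fin m) := sin_eq_zero_of_eq_two_pi_mul_int (hq j)
    refine ⟨fun i => ⟨?_, by rw [cos_eq_one_of_eq_two_pi_mul_int (hu i), mul_one]⟩,
      ?_, ?_, fun j => ?_, fun j => ?_, fun j j' => ?_, fun j j' => ?_⟩
    · rw [deriv_Hhat_update_u, sx, zero_mul, add_zero]
    · simp [deriv_Hhat_x, su, sx, sy]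
    · rw [deriv_Hhat_y, sx, zero_mul]
    · simp [deriv_Hhat_update_p, sp, sq]
    · rw [deriv_Hhat_update_q, sp, zero_mul]
    · simp [deriv_Fhat_update_p, sp, sq]
    · simp [deriv_Fhat_update_q, sp]
end

section
/- Consider the ODE system on the torus 𝕋^{2n+2m+2}: φ̇ᵢ = ωᵢ cos uᵢ + sin x · sin 2uᵢ, u̇ᵢ = 0, ẏ = (Σᵢ sin²uᵢ + sin²x + sin²y) cos x, ẋ = −sin x · sin 2y, q̇ⱼ = (sin²pⱼ + sin²qⱼ) cos pⱼ, ṗⱼ = −sin pⱼ · sin 2qⱼ. For any u⁰ ∈ ℝⁿ with ζ := Σᵢ sin²u⁰ᵢ > 0, the (n+1)-torus {u = u⁰, x = 0, p = q = 0} (with angular coordinates (φ, y)) is invariant under this system, and the induced flow on it is given by φ̇ᵢ = ωᵢ cos u⁰ᵢ and ẏ = ζ + sin²y. In particular, any neighborhood of the torus 𝒯 = {u = 0, x = y = 0, p = q = 0} intersects such invariant (n+1)-tori with u⁰ ≠ 0 arbitrarily close to 0. -/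
/-!
The subspaces `x = 0`, `pⱼ = 0` and `pⱼ = qⱼ = 0` are invariant: the equation for `x`, for `pⱼ`,
and, once `pⱼ = 0`, for `qⱼ` has the form `ḟ = sin f · c(t)` with `c` bounded, hence
`|ḟ| ≤ K |f|`, and Grönwall's inequality in both time directions leaves only `f = 0`. On `x = 0`
the coupling terms `sin x · sin 2uᵢ` and `sin² x` vanish and `cos x = 1`, which gives the induced
flow. Finally, `sin` has no zero in `(-π, π)` except `0`, so `ζ > 0` for every nonzero `u⁰` in the
open sup-norm ball of radius `π`.
-/

open Real

section ODE

variable {E : Type*} [NormedAddCommGroup E] [NormedSpace ℝ E]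

theorem eq_add_sub_smul_of_hasDerivAt_const {f : ℝ → E} {c : E}
    (hf : ∀ t, HasDerivAt f c t) (t₀ t : ℝ) : f t = f t₀ + (t - t₀) • c := by
  have hg (s : ℝ) : HasDerivAt (fun s ↦ f s - s • c) 0 s := by
    simpa using (hf s).fun_sub ((hasDerivAt_id s).smul_const c)
  have hconst : f t - t • c = f t₀ - t₀ • c :=
    is_const_of_deriv_eq_zero (fun s ↦ (hg s).differentiableAt) (fun s ↦ (hg s).deriv) t t₀
  rw [sub_smul, eq_add_of_sub_eq hconst]
  abel

theorem eq_zero_of_le_of_norm_deriv_le_mul_norm {f f' : ℝ → E} {K t₀ : ℝ}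
    (hf : ∀ t, HasDerivAt f (f' t) t) (hK : ∀ t, ‖f' t‖ ≤ K * ‖f t‖) (h₀ : f t₀ = 0)
    {t : ℝ} (ht : t₀ ≤ t) : f t = 0 :=
  eq_zero_of_abs_deriv_le_mul_abs_self_of_eq_zero_right
    (fun s _ ↦ (hf s).continuousAt.continuousWithinAt) (fun s _ ↦ (hf s).hasDerivWithinAt) h₀
    (fun s _ ↦ hK s) t ⟨ht, le_rfl⟩

theorem eq_zero_of_norm_deriv_le_mul_norm {f f' : ℝ → E} {K t₀ : ℝ}
    (hf : ∀ t, HasDerivAt f (f' t) t) (hK : ∀ t, ‖f' t‖ ≤ K * ‖f t‖) (h₀ : f t₀ = 0)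
    (t : ℝ) : f t = 0 := by
  rcases le_total t₀ t with ht | ht
  · exact eq_zero_of_le_of_norm_deriv_le_mul_norm hf hK h₀ ht
  · have hreflect (s : ℝ) : HasDerivAt (fun s ↦ f (t₀ - s)) (-f' (t₀ - s)) s :=
      (hf (t₀ - s)).comp_const_sub t₀ s
    have hzero := eq_zero_of_le_of_norm_deriv_le_mul_norm hreflect
      (fun s ↦ by simpa only [norm_neg] using hK (t₀ - s)) (by simpa using h₀)
      (sub_nonneg.mpr ht)
    simpa using hzero

end ODE

theorem eq_zero_of_hasDerivAt_sin_mul {f c : ℝ → ℝ} {K t₀ : ℝ}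
    (hf : ∀ t, HasDerivAt f (sin (f t) * c t) t) (hc : ∀ t, |c t| ≤ K) (h₀ : f t₀ = 0)
    (t : ℝ) : f t = 0 := by
  refine eq_zero_of_norm_deriv_le_mul_norm (K := K) hf (fun s ↦ ?_) h₀ t
  calc ‖sin (f s) * c s‖ = |c s| * |sin (f s)| := by rw [norm_eq_abs, abs_mul, mul_comm]
    _ ≤ K * ‖f s‖ := mul_le_mul (hc s) abs_sin_le_abs (abs_nonneg _) ((abs_nonneg _).trans (hc s))

section SumSinSq

variable {ι : Type*} [Fintype ι]

theorem sum_sin_sq_pos {u : ι → ℝ} (hu : u ≠ 0) (hπ : ‖u‖ < π) : 0 < ∑ i, sin (u i) ^ 2 := by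
  obtain ⟨i, hi⟩ := Function.ne_iff.mp hu
  obtain ⟨hlower, hupper⟩ := abs_lt.mp ((norm_le_pi_norm u i).trans_lt hπ)
  have hsin : sin (u i) ≠ 0 := (sin_eq_zero_iff_of_lt_of_lt hlower hupper).not.mpr hi
  exact Finset.sum_pos' (fun j _ ↦ sq_nonneg _) ⟨i, Finset.mem_univ i, by positivity⟩

open scoped Topology in
theorem exists_ne_zero_norm_lt_sum_sin_sq_pos [Nonempty ι] {ε : ℝ} (hε : 0 < ε) :
    ∃ u : ι → ℝ, u ≠ 0 ∧ ‖u‖ < ε ∧ 0 < ∑ i, sin (u i) ^ 2 := by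
  have hball : Metric.ball (0 : ι → ℝ) (min ε π) ∈ 𝓝[≠] 0 :=
    mem_nhdsWithin_of_mem_nhds (Metric.ball_mem_nhds 0 (lt_min hε pi_pos))
  obtain ⟨u, hu, hu₀⟩ := Filter.nonempty_of_mem (Filter.inter_mem hball self_mem_nhdsWithin)
  obtain ⟨hu_lt_ε, hu_lt_π⟩ := lt_min_iff.mp (mem_ball_zero_iff.mp hu)
  exact ⟨u, hu₀, hu_lt_ε, sum_sin_sq_pos hu₀ hu_lt_π⟩

end SumSinSq

/-- `IsCompactifiedSolution ω u φ x y p q` says that the curve `t ↦ (u t, φ t, x t, y t, p t, q t)`,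
a lift to the universal cover of a curve on the torus, solves the compactified system with frequency
vector `ω`. The index types `ι` of `(u, φ)` and `κ` of `(p, q)` stand for `{1, …, n}` and
`{1, …, m}`. -/
structure IsCompactifiedSolution {ι κ : Type*} [Fintype ι] (ω : ι → ℝ) (u φ : ℝ → ι → ℝ)
    (x y : ℝ → ℝ) (p q : ℝ → κ → ℝ) : Prop where
  hasDerivAt_φ : ∀ t i, HasDerivAt (fun s ↦ φ s i)
    (ω i * cos (u t i) + sin (x t) * sin (2 * u t i)) t
  hasDerivAt_u : ∀ t i, HasDerivAt (fun s ↦ u s i) 0 t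
  hasDerivAt_y : ∀ t, HasDerivAt y
    (((∑ i, sin (u t i) ^ 2) + sin (x t) ^ 2 + sin (y t) ^ 2) * cos (x t)) t
  hasDerivAt_x : ∀ t, HasDerivAt x (-(sin (x t) * sin (2 * y t))) t
  hasDerivAt_q : ∀ t j, HasDerivAt (fun s ↦ q s j)
    ((sin (p t j) ^ 2 + sin (q t j) ^ 2) * cos (p t j)) t
  hasDerivAt_p : ∀ t j, HasDerivAt (fun s ↦ p s j) (-(sin (p t j) * sin (2 * q t j))) t

namespace IsCompactifiedSolution

variable {ι κ : Type*} [Fintype ι] {ω : ι → ℝ} {u φ : ℝ → ι → ℝ} {x y : ℝ → ℝ}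
  {p q : ℝ → κ → ℝ} {t₀ : ℝ}

theorem u_eq (h : IsCompactifiedSolution ω u φ x y p q) (t₀ t : ℝ) : u t = u t₀ := by
  funext i
  simpa using eq_add_sub_smul_of_hasDerivAt_const (fun s ↦ h.hasDerivAt_u s i) t₀ t

theorem x_eq_zero (h : IsCompactifiedSolution ω u φ x y p q) (hx : x t₀ = 0) (t : ℝ) : x t = 0 :=
  eq_zero_of_hasDerivAt_sin_mul (c := fun s ↦ -sin (2 * y s))
    (fun s ↦ by simpa only [mul_neg] using h.hasDerivAt_x s)
    (fun s ↦ (abs_neg _).trans_le (abs_sin_le_one _)) hx t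

theorem p_eq_zero (h : IsCompactifiedSolution ω u φ x y p q) {j : κ} (hp : p t₀ j = 0) (t : ℝ) :
    p t j = 0 :=
  eq_zero_of_hasDerivAt_sin_mul (f := fun s ↦ p s j) (c := fun s ↦ -sin (2 * q s j))
    (fun s ↦ by simpa only [mul_neg] using h.hasDerivAt_p s j)
    (fun s ↦ (abs_neg _).trans_le (abs_sin_le_one _)) hp t

theorem q_eq_zero (h : IsCompactifiedSolution ω u φ x y p q) {j : κ} (hp : p t₀ j = 0)
    (hq : q t₀ j = 0) (t : ℝ) : q t j = 0 :=
  eq_zero_of_hasDerivAt_sin_mul (f := fun s ↦ q s j) (c := fun s ↦ sin (q s j))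
    (fun s ↦ by simpa [h.p_eq_zero hp s, sq] using h.hasDerivAt_q s j)
    (fun s ↦ abs_sin_le_one _) hq t

theorem φ_eq (h : IsCompactifiedSolution ω u φ x y p q) (hx : x t₀ = 0) (t : ℝ) (i : ι) :
    φ t i = φ t₀ i + (t - t₀) * (ω i * cos (u t₀ i)) := by
  have hφ (s : ℝ) : HasDerivAt (fun s ↦ φ s i) (ω i * cos (u t₀ i)) s := by
    simpa [h.x_eq_zero hx s, h.u_eq t₀ s] using h.hasDerivAt_φ s i
  exact eq_add_sub_smul_of_hasDerivAt_const hφ t₀ t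

theorem hasDerivAt_y_of_x_eq_zero (h : IsCompactifiedSolution ω u φ x y p q) (hx : x t₀ = 0)
    (t : ℝ) : HasDerivAt y ((∑ i, sin (u t₀ i) ^ 2) + sin (y t) ^ 2) t := by
  simpa [h.x_eq_zero hx t, h.u_eq t₀ t] using h.hasDerivAt_y t

end IsCompactifiedSolution

theorem invariant_n_plus_one_tori_general {ι κ : Type*} [Fintype ι] [Nonempty ι] (ω : ι → ℝ) :
    (∀ (u0 : ι → ℝ) (u φ : ℝ → ι → ℝ) (x y : ℝ → ℝ) (p q : ℝ → κ → ℝ),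
      IsCompactifiedSolution ω u φ x y p q → u 0 = u0 → x 0 = 0 → p 0 = 0 → q 0 = 0 →
      ∀ t : ℝ, u t = u0 ∧ x t = 0 ∧ p t = 0 ∧ q t = 0 ∧
        (∀ i, φ t i = φ 0 i + t * (ω i * cos (u0 i))) ∧
        HasDerivAt y ((∑ i, sin (u0 i) ^ 2) + sin (y t) ^ 2) t) ∧
    (∀ ε > (0 : ℝ), ∃ u0 : ι → ℝ, u0 ≠ 0 ∧ ‖u0‖ < ε ∧ 0 < ∑ i, sin (u0 i) ^ 2) := by
  refine ⟨?_, fun ε hε ↦ exists_ne_zero_norm_lt_sum_sin_sq_pos hε⟩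
  rintro _ u φ x y p q h rfl hx hp hq t
  exact ⟨h.u_eq 0 t, h.x_eq_zero hx t, funext fun j ↦ h.p_eq_zero (congrFun hp j) t,
    funext fun j ↦ h.q_eq_zero (congrFun hp j) (congrFun hq j) t,
    fun i ↦ by simpa using h.φ_eq hx t i, h.hasDerivAt_y_of_x_eq_zero hx t⟩

/-- **Invariant (n+1)-tori accumulating on 𝒯 in the compactified system.**
Consider the system on 𝕋^{2n+2m+2} (real lifts):
`φ̇ᵢ = ωᵢ cos uᵢ + sin x · sin 2uᵢ, u̇ᵢ = 0,
ẏ = (Σᵢ sin²uᵢ + sin²x + sin²y) cos x, ẋ = −sin x · sin 2y,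
q̇ⱼ = (sin²pⱼ + sin²qⱼ) cos pⱼ, ṗⱼ = −sin pⱼ · sin 2qⱼ`.
(1) For any `u⁰` with `ζ = Σᵢ sin²u⁰ᵢ > 0`, the (n+1)-torus
`{u = u⁰, x = 0, p = q = 0}` is invariant: every solution starting on it stays
on it, the induced flow being `φᵢ(t) = φᵢ(0) + t ωᵢ cos u⁰ᵢ` and
`ẏ = ζ + sin²y`. (2) In particular, any neighborhood of the torus
𝒯 = {u = 0, x = y = 0, p = q = 0} meets such invariant tori: there are
`u⁰ ≠ 0` arbitrarily close to `0` with `ζ > 0`. -/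
theorem invariant_n_plus_one_tori
    (n m : ℕ) (hn : 1 ≤ n) (ω : Fin n → ℝ) :
    (∀ (u0 : Fin n → ℝ), 0 < (∑ i, Real.sin (u0 i) ^ 2) →
      ∀ (u φ : ℝ → Fin n → ℝ) (x y : ℝ → ℝ) (p q : ℝ → Fin m → ℝ),
      (∀ t i, HasDerivAt (fun s => φ s i)
        (ω i * Real.cos (u t i) + Real.sin (x t) * Real.sin (2 * u t i)) t) →
      (∀ t i, HasDerivAt (fun s => u s i) 0 t) →
      (∀ t, HasDerivAt y
        (((∑ i, Real.sin (u t i) ^ 2) + Real.sin (x t) ^ 2 + Real.sin (y t) ^ 2)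
          * Real.cos (x t)) t) →
      (∀ t, HasDerivAt x (-(Real.sin (x t) * Real.sin (2 * y t))) t) →
      (∀ t j, HasDerivAt (fun s => q s j)
        ((Real.sin (p t j) ^ 2 + Real.sin (q t j) ^ 2) * Real.cos (p t j)) t) →
      (∀ t j, HasDerivAt (fun s => p s j)
        (-(Real.sin (p t j) * Real.sin (2 * q t j))) t) →
      u 0 = u0 → x 0 = 0 → p 0 = 0 → q 0 = 0 →
      ∀ t : ℝ, u t = u0 ∧ x t = 0 ∧ p t = 0 ∧ q t = 0 ∧
        (∀ i, φ t i = φ 0 i + t * (ω i * Real.cos (u0 i))) ∧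
        HasDerivAt y ((∑ i, Real.sin (u0 i) ^ 2) + Real.sin (y t) ^ 2) t) ∧
    (∀ ε > (0 : ℝ), ∃ u0 : Fin n → ℝ, u0 ≠ 0 ∧ ‖u0‖ < ε ∧
      0 < (∑ i, Real.sin (u0 i) ^ 2)) := by
  have : Nonempty (Fin n) := Fin.pos_iff_nonempty.mp hn
  obtain ⟨invariant, accumulate⟩ := invariant_n_plus_one_tori_general (κ := Fin m) ω
  exact ⟨fun u0 _ u φ x y p q hφ hu hy hx hq hp ↦
    invariant u0 u φ x y p q ⟨hφ, hu, hy, hx, hq, hp⟩, accumulate⟩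
end

section
/- Consider the ODE system on 𝒦 = 𝕋ⁿ × ℝ^{ℓ+m+1}: φ̇ᵢ = ωᵢ, v̇ₖ = 0, ẏ = Σₖvₖ² + y² + Σⱼqⱼ², q̇ⱼ = 0. Let z : ℝ → 𝒦 be a solution whose orbit is recurrent, in the sense that there exists a sequence of times t_k → +∞ with z(t_k) → z(0). Then z(0) satisfies v = 0, y = 0, q = 0. Consequently the torus {v = 0, y = 0, q = 0} is the unique Kronecker n-torus of this system in the whole phase space. -/
open Real Filter Topology

/-! Along every solution `y` is nondecreasing, so once it has increased it can never come back: a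
recurrent `y` is constant in forward time. Its derivative at the initial time, which is the sum of
the squares of all the coordinates of `v`, `y` and `q`, therefore vanishes. -/

theorem le_of_monotone_of_mapClusterPt_atTop {α β : Type*} [Preorder α] [Preorder β]
    [TopologicalSpace β] [ClosedIciTopology β] {f : α → β} {x : β}
    (hf : Monotone f) (hx : MapClusterPt x atTop f) (a : α) : f a ≤ x :=
  isClosed_Ici.mem_of_mapClusterPt hx ((eventually_ge_atTop a).mono fun _ hab => hf hab)

theorem eq_of_monotone_of_mapClusterPt_atTop {α β : Type*} [Preorder α] [PartialOrder β]
    [TopologicalSpace β] [ClosedIciTopology β] {f : α → β} {a b : α}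
    (hf : Monotone f) (hrec : MapClusterPt (f a) atTop f) (hab : a ≤ b) : f b = f a :=
  (le_of_monotone_of_mapClusterPt_atTop hf hrec b).antisymm (hf hab)

theorem hasDerivWithinAt_eq_zero_of_monotone_of_mapClusterPt_atTop {E : Type*}
    [NormedAddCommGroup E] [NormedSpace ℝ E] [PartialOrder E] [ClosedIciTopology E]
    {f : ℝ → E} {f' : E} {a : ℝ} (hf : Monotone f) (hrec : MapClusterPt (f a) atTop f)
    (hf' : HasDerivWithinAt f f' (Set.Ici a) a) : f' = 0 := by
  have hconst : HasDerivWithinAt f 0 (Set.Ici a) a :=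
    (hasDerivWithinAt_const a (Set.Ici a) (f a)).congr
      (fun _ ht => eq_of_monotone_of_mapClusterPt_atTop hf hrec ht) rfl
  exact (uniqueDiffWithinAt_Ici a).eq_deriv _ hf' hconst

section

variable {ι κ R : Type*} [Fintype ι] [Fintype κ] [Ring R] [LinearOrder R] [IsStrictOrderedRing R]

theorem sum_sq_eq_zero_iff {x : ι → R} : ∑ i, x i ^ 2 = 0 ↔ x = 0 := by
  simpa only [dotProduct, sq] using dotProduct_self_eq_zero (v := x)

theorem sum_sq_add_sq_add_sum_sq_eq_zero_iff {v : ι → R} {y : R} {q : κ → R} :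
    (∑ k, v k ^ 2) + y ^ 2 + ∑ j, q j ^ 2 = 0 ↔ v = 0 ∧ y = 0 ∧ q = 0 := by
  have hv : 0 ≤ ∑ k, v k ^ 2 := Finset.sum_nonneg fun k _ => sq_nonneg (v k)
  have hq : 0 ≤ ∑ j, q j ^ 2 := Finset.sum_nonneg fun j _ => sq_nonneg (q j)
  rw [add_eq_zero_iff_of_nonneg (add_nonneg hv (sq_nonneg y)) hq,
    add_eq_zero_iff_of_nonneg hv (sq_nonneg y), sum_sq_eq_zero_iff, sum_sq_eq_zero_iff,
    sq_eq_zero_iff, and_assoc]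

end

theorem unique_kronecker_torus_reversible_general {ι κ : Type*} [Fintype ι] [Fintype κ]
    {v : ℝ → ι → ℝ} {y : ℝ → ℝ} {q : ℝ → κ → ℝ} {t₀ : ℝ}
    (hy : ∀ t, HasDerivAt y ((∑ k, v t k ^ 2) + y t ^ 2 + ∑ j, q t j ^ 2) t)
    (hrec : MapClusterPt (y t₀) atTop y) :
    v t₀ = 0 ∧ y t₀ = 0 ∧ q t₀ = 0 := by
  have hmono : Monotone y := monotone_of_hasDerivAt_nonneg hy fun t => by positivity
  exact sum_sq_add_sq_add_sum_sq_eq_zero_iff.mp <|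
    hasDerivWithinAt_eq_zero_of_monotone_of_mapClusterPt_atTop hmono hrec (hy t₀).hasDerivWithinAt

/-- **Uniqueness of the Kronecker n-torus of the reversible system**
`φ̇ᵢ = ωᵢ, v̇ₖ = 0, ẏ = Σₖvₖ² + y² + Σⱼqⱼ², q̇ⱼ = 0` on 𝒦 = 𝕋ⁿ × ℝ^{ℓ+m+1}
(the angles φ represented by their real lifts and compared in
ℝ/2πℤ = `AddCircle (2π)`). If a solution is recurrent — there is a sequence of
times `tₖ → +∞` along which the solution returns to its initial point — then the
initial point satisfies `v = 0, y = 0, q = 0`. Consequently the torus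
{v = 0, y = 0, q = 0} is the unique Kronecker n-torus of this system in the
whole phase space. -/
theorem unique_kronecker_torus_reversible
    (n l m : ℕ) (ω : Fin n → ℝ)
    (φ : ℝ → Fin n → ℝ) (v : ℝ → Fin l → ℝ) (y : ℝ → ℝ) (q : ℝ → Fin m → ℝ)
    (hφ : ∀ t i, HasDerivAt (fun s => φ s i) (ω i) t)
    (hv : ∀ t k, HasDerivAt (fun s => v s k) 0 t)
    (hy : ∀ t, HasDerivAt y
      ((∑ k, (v t k) ^ 2) + (y t) ^ 2 + ∑ j, (q t j) ^ 2) t)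
    (hq : ∀ t j, HasDerivAt (fun s => q s j) 0 t)
    (tk : ℕ → ℝ) (htk : Tendsto tk atTop atTop)
    (hrecv : Tendsto (fun k => v (tk k)) atTop (𝓝 (v 0)))
    (hrecy : Tendsto (fun k => y (tk k)) atTop (𝓝 (y 0)))
    (hrecq : Tendsto (fun k => q (tk k)) atTop (𝓝 (q 0)))
    (hrecφ : ∀ i, Tendsto (fun k => ((φ (tk k) i : ℝ) : AddCircle (2 * π)))
      atTop (𝓝 ((φ 0 i : ℝ) : AddCircle (2 * π)))) :
    v 0 = 0 ∧ y 0 = 0 ∧ q 0 = 0 :=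
  unique_kronecker_torus_reversible_general hy (.of_comp htk hrecy.mapClusterPt)
end

section
/- Consider the ODE system on the torus 𝒦̂ = 𝕋^{n+ℓ+m+1}: φ̇ᵢ = ωᵢ, v̇ₖ = 0, ẏ = Σₖ sin²vₖ + sin²y + Σⱼ sin²qⱼ, q̇ⱼ = 0. For any v⁰ ∈ ℝ^ℓ with ξ := Σₖ sin²v⁰ₖ > 0, the (n+1)-torus {v = v⁰, q = 0} (with angular coordinates (φ, y)) is invariant, and the induced flow on it is φ̇ᵢ = ωᵢ, ẏ = ξ + sin²y; the y-motion advances by 2π in time 2π/√(ξ(ξ+1)), so this invariant torus is a Kronecker (n+1)-torus with frequency vector (ω₁, …, ωₙ, √(ξ(ξ+1))). Moreover, for each δ₁,…,δ_{ℓ+m+1} ∈ {0, π}, the n-torus {vₖ = δₖ, y = δ_{ℓ+1}, qⱼ = δ_{ℓ+1+j}} is a symmetric Kronecker n-torus with frequency vector ω. -/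
open Real

/-!
On a torus where `v` and `q` are fixed, `y` obeys the scalar equation `ẏ = ξ + sin² y`. For `ξ > 0`
and `a = √(ξ (ξ + 1)) / ξ`, the continuous branch `Θ` of `arctan (a tan y)` is an angular coordinate
in which this equation becomes `Θ̇ = √(ξ (ξ + 1))`, so `y` advances by `2π` in the time `Θ` needs to
do so. For `ξ = 0` the right-hand side is Lipschitz and vanishes at `y ∈ πℤ`, so uniqueness of
solutions keeps `y` there; and points of `πℤ` are exactly the fixed points of negation modulo `2π`.
-/

section LinearFlow

variable {𝕜 E : Type*} [RCLike 𝕜] [NormedAddCommGroup E] [NormedSpace 𝕜 E]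

lemma eq_add_smul_of_hasDerivAt_const {f : 𝕜 → E} {c : E} (hf : ∀ t, HasDerivAt f c t) (s t : 𝕜) :
    f t = f s + (t - s) • c := by
  have hdiff (x : 𝕜) : HasDerivAt (fun x => f x - x • c) 0 x :=
    ((hf x).sub ((hasDerivAt_id x).smul_const c)).congr_deriv (by rw [one_smul, sub_self])
  have hconst : f t - t • c = f s - s • c :=
    is_const_of_deriv_eq_zero (fun x => (hdiff x).differentiableAt) (fun x => (hdiff x).deriv) t s
  rw [sub_smul, sub_eq_iff_eq_add.1 hconst]
  abel

end LinearFlow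

section AutonomousODE

lemma eq_of_hasDerivAt_of_lipschitzWith_of_eq_zero {E : Type*} [NormedAddCommGroup E]
    [NormedSpace ℝ E] {K : NNReal} {g : E → E} (hg : LipschitzWith K g) {y : ℝ → E}
    (hy : ∀ t, HasDerivAt y (g (y t)) t) {s : ℝ} (hs : g (y s) = 0) (t : ℝ) : y t = y s := by
  have hunique : y = fun _ => y s :=
    ODE_solution_unique_univ (v := fun _ => g) (s := fun _ => Set.univ)
      (fun _ => hg.lipschitzOnWith) (fun t => ⟨hy t, trivial⟩)
      (fun t => ⟨by simpa only [hs] using hasDerivAt_const t (y s), trivial⟩) rfl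
  exact congrFun hunique t

lemma add_period_of_hasDerivAt_straightening {g H y : ℝ → ℝ} {r p : ℝ} (hr : 0 < r)
    (hg : ∀ z, 0 < g z) (hH : ∀ z, HasDerivAt H (r / g z) z) (hper : ∀ z, H (z + p) = H z + p)
    (hy : ∀ t, HasDerivAt y (g (y t)) t) (t : ℝ) : y (t + p / r) = y t + p := by
  have hmono : StrictMono H := strictMono_of_deriv_pos fun z => by
    rw [(hH z).deriv]
    exact div_pos hr (hg z)
  have hlinear (s : ℝ) : HasDerivAt (H ∘ y) r s :=
    ((hH (y s)).comp s (hy s)).congr_deriv (div_mul_cancel₀ r (hg (y s)).ne')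
  apply hmono.injective
  calc H (y (t + p / r)) = H (y t) + (t + p / r - t) • r :=
        eq_add_smul_of_hasDerivAt_const hlinear t (t + p / r)
    _ = H (y t) + p := by rw [add_sub_cancel_left, smul_eq_mul, div_mul_cancel₀ p hr.ne']
    _ = H (y t + p) := (hper (y t)).symm

end AutonomousODE

section StraightenedAngle

lemma hasDerivAt_arctan_div {N D : ℝ → ℝ} {N' D' x : ℝ} (hN : HasDerivAt N N' x)
    (hD : HasDerivAt D D' x) (hx : D x ≠ 0) :
    HasDerivAt (fun z => arctan (N z / D z)) ((N' * D x - N x * D') / (D x ^ 2 + N x ^ 2)) x := by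
  refine (hN.div hD hx).arctan.congr_deriv ?_
  have hpos : D x ^ 2 + N x ^ 2 ≠ 0 := by positivity
  simp only [Pi.div_apply]
  field_simp

lemma cos_sq_add_mul_sin_sq_pos {a : ℝ} (ha : 0 < a) (y : ℝ) :
    0 < cos y ^ 2 + a * sin y ^ 2 := by
  obtain hsin | hsin := eq_or_ne (sin y) 0
  · simp [cos_sq', hsin]
  · positivity

/-- The lift to `ℝ` of the circle diffeomorphism `tan y ↦ a tan y`, namely the branch of
`arctan (a * tan y)` that is continuous in `y`. It is written as `y` plus a correction, given by the
subtraction formula for `tan`, so that no branch has to be chosen. -/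
noncomputable def straightenedAngle (a y : ℝ) : ℝ :=
  y + arctan ((a - 1) * (sin y * cos y) / (cos y ^ 2 + a * sin y ^ 2))

lemma hasDerivAt_straightenedAngle {a : ℝ} (ha : 0 < a) (y : ℝ) :
    HasDerivAt (straightenedAngle a) (a / (cos y ^ 2 + a ^ 2 * sin y ^ 2)) y := by
  have hN : HasDerivAt (fun z => (a - 1) * (sin z * cos z))
      ((a - 1) * (cos y ^ 2 - sin y ^ 2)) y :=
    (((hasDerivAt_sin y).mul (hasDerivAt_cos y)).const_mul (a - 1)).congr_deriv (by ring)
  have hD : HasDerivAt (fun z => cos z ^ 2 + a * sin z ^ 2) (2 * (a - 1) * (sin y * cos y)) y :=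
    (((hasDerivAt_cos y).pow 2).add (((hasDerivAt_sin y).pow 2).const_mul a)).congr_deriv
      (by push_cast; ring)
  have hnorm : (cos y ^ 2 + a * sin y ^ 2) ^ 2 + ((a - 1) * (sin y * cos y)) ^ 2
      = cos y ^ 2 + a ^ 2 * sin y ^ 2 := by
    linear_combination (cos y ^ 2 + a ^ 2 * sin y ^ 2) * sin_sq_add_cos_sq y
  have hpos := cos_sq_add_mul_sin_sq_pos (pow_pos ha 2) y
  have harctan := hasDerivAt_arctan_div hN hD (cos_sq_add_mul_sin_sq_pos ha y).ne'
  rw [hnorm] at harctan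
  refine ((hasDerivAt_id y).add harctan).congr_deriv ?_
  rw [eq_div_iff hpos.ne', add_mul, div_mul_cancel₀ _ hpos.ne']
  linear_combination (a * (sin y ^ 2 + cos y ^ 2 + 1) - cos y ^ 2 - a ^ 2 * sin y ^ 2)
    * sin_sq_add_cos_sq y

lemma straightenedAngle_add_two_pi (a y : ℝ) :
    straightenedAngle a (y + 2 * π) = straightenedAngle a y + 2 * π := by
  simp only [straightenedAngle, sin_add_two_pi, cos_add_two_pi]
  ring

lemma hasDerivAt_straightenedAngle_sqrt {ξ : ℝ} (hξ : 0 < ξ) (y : ℝ) :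
    HasDerivAt (straightenedAngle (√(ξ * (ξ + 1)) / ξ)) (√(ξ * (ξ + 1)) / (ξ + sin y ^ 2)) y := by
  have hsqrt : √(ξ * (ξ + 1)) ^ 2 = ξ * (ξ + 1) := sq_sqrt (by positivity)
  have hden : cos y ^ 2 + (√(ξ * (ξ + 1)) / ξ) ^ 2 * sin y ^ 2 = (ξ + sin y ^ 2) / ξ := by
    rw [div_pow, hsqrt, cos_sq']
    field_simp
    ring
  refine (hasDerivAt_straightenedAngle (by positivity) y).congr_deriv ?_
  rw [hden, div_div_div_cancel_right₀ hξ.ne']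

end StraightenedAngle

section ScalarEquation

lemma add_two_pi_of_hasDerivAt_add_sin_sq {ξ : ℝ} (hξ : 0 < ξ) {y : ℝ → ℝ}
    (hy : ∀ t, HasDerivAt y (ξ + sin (y t) ^ 2) t) (t : ℝ) :
    y (t + 2 * π / √(ξ * (ξ + 1))) = y t + 2 * π :=
  add_period_of_hasDerivAt_straightening (g := fun z => ξ + sin z ^ 2) (by positivity)
    (fun _ => by positivity) (hasDerivAt_straightenedAngle_sqrt hξ)
    (straightenedAngle_add_two_pi _) hy t

lemma lipschitzWith_sin_sq : LipschitzWith 1 fun z : ℝ => sin z ^ 2 := by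
  have hderiv (z : ℝ) : HasDerivAt (fun z : ℝ => sin z ^ 2) (sin (2 * z)) z :=
    ((hasDerivAt_sin z).pow 2).congr_deriv (by rw [sin_two_mul]; push_cast; ring)
  refine lipschitzWith_of_nnnorm_deriv_le (fun z => (hderiv z).differentiableAt) fun z => ?_
  rw [(hderiv z).deriv]
  exact abs_sin_le_one (2 * z)

end ScalarEquation

section Symmetry

lemma sin_eq_zero_of_eq_zero_or_eq_pi {d : ℝ} (hd : d = 0 ∨ d = π) : sin d = 0 := by
  rcases hd with rfl | rfl
  exacts [sin_zero, sin_pi]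

lemma coe_neg_eq_coe_of_sin_eq_zero {d x : ℝ} (hd : sin d = 0)
    (hx : (x : AddCircle (2 * π)) = d) : ((-x : ℝ) : AddCircle (2 * π)) = d := by
  rw [AddCircle.coe_neg, hx]
  exact Real.Angle.neg_eq_self_iff.2 (Real.Angle.sin_eq_zero_iff.1 hd)

end Symmetry

section Trajectories

variable {ι κ μ : Type*} [Fintype κ] [Fintype μ]

/-- The part `ξ = Σₖ sin² vₖ + Σⱼ sin² qⱼ` of `ẏ` that does not involve `y`; it is constant along
trajectories. -/
noncomputable def drift (v : κ → ℝ) (q : μ → ℝ) : ℝ :=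
  (∑ k, sin (v k) ^ 2) + ∑ j, sin (q j) ^ 2

/-- `(φ, v, y, q)` is a solution, defined for all times, of the reversible system
`φ̇ᵢ = ωᵢ, v̇ₖ = 0, ẏ = Σₖ sin² vₖ + sin² y + Σⱼ sin² qⱼ, q̇ⱼ = 0`. Angular coordinates are encoded
by their real lifts. -/
structure IsTrajectory (ω : ι → ℝ) (φ : ℝ → ι → ℝ) (v : ℝ → κ → ℝ) (y : ℝ → ℝ)
    (q : ℝ → μ → ℝ) : Prop where
  hasDerivAt_φ : ∀ t i, HasDerivAt (fun s => φ s i) (ω i) t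
  hasDerivAt_v : ∀ t k, HasDerivAt (fun s => v s k) 0 t
  hasDerivAt_y : ∀ t, HasDerivAt y
    ((∑ k, sin (v t k) ^ 2) + sin (y t) ^ 2 + ∑ j, sin (q t j) ^ 2) t
  hasDerivAt_q : ∀ t j, HasDerivAt (fun s => q s j) 0 t

namespace IsTrajectory

variable {ω : ι → ℝ} {φ : ℝ → ι → ℝ} {v : ℝ → κ → ℝ} {y : ℝ → ℝ} {q : ℝ → μ → ℝ}

lemma φ_eq_add_mul (h : IsTrajectory ω φ v y q) (t : ℝ) (i : ι) : φ t i = φ 0 i + t * ω i := by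
  simpa using eq_add_smul_of_hasDerivAt_const (fun s => h.hasDerivAt_φ s i) 0 t

lemma v_eq (h : IsTrajectory ω φ v y q) (t : ℝ) : v t = v 0 := by
  funext k
  simpa using eq_add_smul_of_hasDerivAt_const (fun s => h.hasDerivAt_v s k) 0 t

lemma q_eq (h : IsTrajectory ω φ v y q) (t : ℝ) : q t = q 0 := by
  funext j
  simpa using eq_add_smul_of_hasDerivAt_const (fun s => h.hasDerivAt_q s j) 0 t

lemma hasDerivAt_y_drift (h : IsTrajectory ω φ v y q) (t : ℝ) :
    HasDerivAt y (drift (v 0) (q 0) + sin (y t) ^ 2) t := by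
  refine (h.hasDerivAt_y t).congr_deriv ?_
  rw [h.v_eq t, h.q_eq t, drift, add_right_comm]

lemma y_add_two_pi (h : IsTrajectory ω φ v y q) (hξ : 0 < drift (v 0) (q 0)) (t : ℝ) :
    y (t + 2 * π / √(drift (v 0) (q 0) * (drift (v 0) (q 0) + 1))) = y t + 2 * π :=
  add_two_pi_of_hasDerivAt_add_sin_sq hξ h.hasDerivAt_y_drift t

lemma y_eq (h : IsTrajectory ω φ v y q) (hξ : drift (v 0) (q 0) = 0) (hy : sin (y 0) = 0)
    (t : ℝ) : y t = y 0 :=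
  eq_of_hasDerivAt_of_lipschitzWith_of_eq_zero lipschitzWith_sin_sq
    (fun s => by simpa only [hξ, zero_add] using h.hasDerivAt_y_drift s) (by simp [hy]) t

end IsTrajectory

theorem kronecker_tori_compact_reversible_general (ω : ι → ℝ) :
    (∀ (v0 : κ → ℝ) (q0 : μ → ℝ), 0 < drift v0 q0 →
      ∀ φ v y q, IsTrajectory ω φ v y q → v 0 = v0 → q 0 = q0 →
      ∀ t : ℝ, v t = v0 ∧ q t = q0 ∧ (∀ i, φ t i = φ 0 i + t * ω i) ∧
        HasDerivAt y (drift v0 q0 + sin (y t) ^ 2) t ∧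
        y (t + 2 * π / √(drift v0 q0 * (drift v0 q0 + 1))) = y t + 2 * π) ∧
    (∀ (δv : κ → ℝ) (δy : ℝ) (δq : μ → ℝ),
      (∀ k, sin (δv k) = 0) → sin δy = 0 → (∀ j, sin (δq j) = 0) →
      (∀ φ v y q, IsTrajectory ω φ v y q → v 0 = δv → y 0 = δy → q 0 = δq →
        ∀ t : ℝ, v t = δv ∧ y t = δy ∧ q t = δq ∧ ∀ i, φ t i = φ 0 i + t * ω i) ∧
      ∀ (v0 : κ → ℝ) (y0 : ℝ) (q0 : μ → ℝ),
        ((∀ k, (v0 k : AddCircle (2 * π)) = δv k) ∧ (y0 : AddCircle (2 * π)) = δy ∧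
          ∀ j, (q0 j : AddCircle (2 * π)) = δq j) →
        (∀ k, (v0 k : AddCircle (2 * π)) = δv k) ∧ ((-y0 : ℝ) : AddCircle (2 * π)) = δy ∧
          ∀ j, ((-q0 j : ℝ) : AddCircle (2 * π)) = δq j) := by
  refine ⟨?_, fun δv δy δq hδv hδy hδq => ⟨?_, ?_⟩⟩
  · rintro _ _ hξ φ v y q h rfl rfl t
    exact ⟨h.v_eq t, h.q_eq t, h.φ_eq_add_mul t, h.hasDerivAt_y_drift t, h.y_add_two_pi hξ t⟩
  · rintro φ v y q h rfl rfl rfl t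
    have hξ : drift (v 0) (q 0) = 0 := by simp [drift, hδv, hδq]
    exact ⟨h.v_eq t, h.y_eq hξ hδy t, h.q_eq t, h.φ_eq_add_mul t⟩
  · rintro v0 y0 q0 ⟨hv, hy, hq⟩
    exact ⟨hv, coe_neg_eq_coe_of_sin_eq_zero hδy hy,
      fun j => coe_neg_eq_coe_of_sin_eq_zero (hδq j) (hq j)⟩

end Trajectories

/-- **Kronecker tori of the compactified reversible system**
`φ̇ᵢ = ωᵢ, v̇ₖ = 0, ẏ = Σₖ sin²vₖ + sin²y + Σⱼ sin²qⱼ, q̇ⱼ = 0` on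
𝒦̂ = 𝕋^{n+ℓ+m+1} (all coordinates angular, represented by real lifts, the
involution being `G : (φ, v, y, q) ↦ (−φ, v, −y, −q)`).
(1) For any `v⁰` with `ξ = Σₖ sin²v⁰ₖ > 0`, the (n+1)-torus `{v = v⁰, q = 0}` is
invariant: every solution starting on it stays on it, with `φ(t) = φ(0) + tω`,
`ẏ = ξ + sin²y`, and the y-motion advancing by 2π in time `2π/√(ξ(ξ+1))`; so it
is a Kronecker (n+1)-torus with frequency vector `(ω₁, …, ωₙ, √(ξ(ξ+1)))`.
(2) For every choice of `δv k, δy, δq j ∈ {0, π}`, the n-torus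
`{v = δv, y = δy, q = δq}` is an invariant torus carrying the linear flow
`φ̇ = ω` and it is invariant under `G` (membership taken mod 2π): a symmetric
Kronecker n-torus with frequency vector ω. -/
theorem kronecker_tori_compact_reversible
    (n l m : ℕ) (ω : Fin n → ℝ) :
    -- (1) the invariant (n+1)-tori {v = v⁰, q = 0}
    (∀ v0 : Fin l → ℝ, 0 < (∑ k, Real.sin (v0 k) ^ 2) →
      ∀ (φ : ℝ → Fin n → ℝ) (v : ℝ → Fin l → ℝ) (y : ℝ → ℝ) (q : ℝ → Fin m → ℝ),
      (∀ t i, HasDerivAt (fun s => φ s i) (ω i) t) →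
      (∀ t k, HasDerivAt (fun s => v s k) 0 t) →
      (∀ t, HasDerivAt y ((∑ k, Real.sin (v t k) ^ 2) + Real.sin (y t) ^ 2
        + ∑ j, Real.sin (q t j) ^ 2) t) →
      (∀ t j, HasDerivAt (fun s => q s j) 0 t) →
      v 0 = v0 → q 0 = 0 →
      ∀ t : ℝ, v t = v0 ∧ q t = 0 ∧
        (∀ i, φ t i = φ 0 i + t * ω i) ∧
        HasDerivAt y ((∑ k, Real.sin (v0 k) ^ 2) + Real.sin (y t) ^ 2) t ∧
        y (t + 2 * π / Real.sqrt ((∑ k, Real.sin (v0 k) ^ 2)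
          * ((∑ k, Real.sin (v0 k) ^ 2) + 1))) = y t + 2 * π) ∧
    -- (2) the 2^{ℓ+m+1} symmetric Kronecker n-tori {v = δv, y = δy, q = δq}
    (∀ (δv : Fin l → ℝ) (δy : ℝ) (δq : Fin m → ℝ),
      (∀ k, δv k = 0 ∨ δv k = π) → (δy = 0 ∨ δy = π) →
      (∀ j, δq j = 0 ∨ δq j = π) →
      -- invariance and linear flow
      (∀ (φ : ℝ → Fin n → ℝ) (v : ℝ → Fin l → ℝ) (y : ℝ → ℝ) (q : ℝ → Fin m → ℝ),
        (∀ t i, HasDerivAt (fun s => φ s i) (ω i) t) →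
        (∀ t k, HasDerivAt (fun s => v s k) 0 t) →
        (∀ t, HasDerivAt y ((∑ k, Real.sin (v t k) ^ 2) + Real.sin (y t) ^ 2
          + ∑ j, Real.sin (q t j) ^ 2) t) →
        (∀ t j, HasDerivAt (fun s => q s j) 0 t) →
        v 0 = δv → y 0 = δy → q 0 = δq →
        ∀ t : ℝ, v t = δv ∧ y t = δy ∧ q t = δq ∧
          (∀ i, φ t i = φ 0 i + t * ω i)) ∧
      -- invariance of the torus under G : (φ, v, y, q) ↦ (−φ, v, −y, −q)
      (∀ (φ0 : Fin n → ℝ) (v0 : Fin l → ℝ) (y0 : ℝ) (q0 : Fin m → ℝ),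
        ((∀ k, ((v0 k : ℝ) : AddCircle (2 * π)) = ((δv k : ℝ) : AddCircle (2 * π))) ∧
         ((y0 : ℝ) : AddCircle (2 * π)) = ((δy : ℝ) : AddCircle (2 * π)) ∧
         (∀ j, ((q0 j : ℝ) : AddCircle (2 * π)) = ((δq j : ℝ) : AddCircle (2 * π)))) →
        ((∀ k, ((v0 k : ℝ) : AddCircle (2 * π)) = ((δv k : ℝ) : AddCircle (2 * π))) ∧
         ((-y0 : ℝ) : AddCircle (2 * π)) = ((δy : ℝ) : AddCircle (2 * π)) ∧
         (∀ j, ((-q0 j : ℝ) : AddCircle (2 * π)) = ((δq j : ℝ) : AddCircle (2 * π)))))) := by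
  obtain ⟨hpos, hsymm⟩ := kronecker_tori_compact_reversible_general (κ := Fin l) (μ := Fin m) ω
  refine ⟨fun v0 hξ φ v y q hφ hv hy hq hv0 hq0 => ?_, fun δv δy δq hδv hδy hδq => ?_⟩
  · have hdrift : drift v0 (0 : Fin m → ℝ) = ∑ k, sin (v0 k) ^ 2 := by simp [drift]
    simpa only [hdrift] using hpos v0 0 (hdrift ▸ hξ) φ v y q ⟨hφ, hv, hy, hq⟩ hv0 hq0
  · obtain ⟨hinv, hG⟩ := hsymm δv δy δq (fun k => sin_eq_zero_of_eq_zero_or_eq_pi (hδv k))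
      (sin_eq_zero_of_eq_zero_or_eq_pi hδy) fun j => sin_eq_zero_of_eq_zero_or_eq_pi (hδq j)
    exact ⟨fun φ v y q hφ hv hy hq => hinv φ v y q ⟨hφ, hv, hy, hq⟩, fun _ => hG⟩
end
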